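/- Let k ≥ 1 be an integer, ε ∈ {1, −1}, and δ(x, y) = x² + ε·y^{k+1} (an A_k-type singular impasse curve). Let X = (P, Q) be real-analytic on a neighborhood of the origin in ℝ² with P(0,0) = 0, Q(0,0) ≠ 0, and such that (∂ⁿP/∂yⁿ)(0,0) = 0 for every integer n with 1 ≤ 2n ≤ k − 1 (equivalently, the order of vanishing n₀ of y ↦ P(0, y) at 0 satisfies k − 1 < 2n₀). Then the constrained system (X, δ) is orientation-preserving C⁰-orbitally equivalent at (0, 0) to the constrained system (Y, δ), where Y is the constant vector field Y ≡ (0, Q(0,0)). -/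

import Mathlib

/-- A phase curve of the vector field `X` in the set `V`: a differentiable curve
`c : J → V` on a nondegenerate interval `J` with `c'(t) = X(c(t))` for all `t ∈ J`. -/
def IsPhaseCurve (X : ℝ × ℝ → ℝ × ℝ) (V : Set (ℝ × ℝ)) (J : Set ℝ) (c : ℝ → ℝ × ℝ) : Prop :=
  J.OrdConnected ∧ J.Nontrivial ∧ (∀ t ∈ J, c t ∈ V) ∧
    ∀ t ∈ J, HasDerivWithinAt c (X (c t)) J t

/-- The planar constrained systems `(X, δ)` and `(Y, γ)` are orientation-preserving
`C⁰`-orbitally equivalent at `(p₁, p₂)`: there are open neighborhoods `V₁ ∋ p₁`, `V₂ ∋ p₂`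
and a homeomorphism `Φ : V₁ → V₂` sending `p₁` to `p₂` and impasse set to impasse set, which
carries phase curves of `X` off the impasse set onto phase curves of `Y` off the impasse set
up to continuous strictly increasing reparametrizations, and conversely for `Φ⁻¹`. -/
def OrbitallyEquivAt (X : ℝ × ℝ → ℝ × ℝ) (δ : ℝ × ℝ → ℝ) (p₁ : ℝ × ℝ)
    (Y : ℝ × ℝ → ℝ × ℝ) (γ : ℝ × ℝ → ℝ) (p₂ : ℝ × ℝ) : Prop :=
  ∃ (V₁ V₂ : Set (ℝ × ℝ)) (Φ Φinv : ℝ × ℝ → ℝ × ℝ),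
    IsOpen V₁ ∧ IsOpen V₂ ∧ p₁ ∈ V₁ ∧ p₂ ∈ V₂ ∧
    -- Φ is a homeomorphism from V₁ onto V₂ with inverse Φinv
    ContinuousOn Φ V₁ ∧ ContinuousOn Φinv V₂ ∧
    Set.MapsTo Φ V₁ V₂ ∧ Set.MapsTo Φinv V₂ V₁ ∧
    (∀ z ∈ V₁, Φinv (Φ z) = z) ∧ (∀ z ∈ V₂, Φ (Φinv z) = z) ∧
    Φ p₁ = p₂ ∧
    -- Φ maps the impasse set to the impasse set
    Φ '' ({z | δ z = 0} ∩ V₁) = {z | γ z = 0} ∩ V₂ ∧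
    -- Φ maps phase curves of X to phase curves of Y, preserving orientation
    (∀ (J : Set ℝ) (c : ℝ → ℝ × ℝ),
      IsPhaseCurve X (V₁ \ {z | δ z = 0}) J c →
      ∃ (J' : Set ℝ) (d : ℝ → ℝ × ℝ) (τ : ℝ → ℝ),
        IsPhaseCurve Y (V₂ \ {z | γ z = 0}) J' d ∧
        ContinuousOn τ J ∧ StrictMonoOn τ J ∧ τ '' J = J' ∧
        ∀ t ∈ J, Φ (c t) = d (τ t)) ∧
    -- Φ⁻¹ maps phase curves of Y to phase curves of X, preserving orientation
    (∀ (J : Set ℝ) (d : ℝ → ℝ × ℝ),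
      IsPhaseCurve Y (V₂ \ {z | γ z = 0}) J d →
      ∃ (J' : Set ℝ) (c : ℝ → ℝ × ℝ) (τ : ℝ → ℝ),
        IsPhaseCurve X (V₁ \ {z | δ z = 0}) J' c ∧
        ContinuousOn τ J ∧ StrictMonoOn τ J ∧ τ '' J = J' ∧
        ∀ t ∈ J, Φinv (d t) = c (τ t))

/-!
Since `Q ≠ 0`, the orbits of `X` near the origin are graphs `x = F (u, y)` of solutions of
`dx/dy = P / Q`, and `(u, y) ↦ (F (u, y), y)` carries the vertical lines to them. It therefore
remains to move the curve `F (u, y) ^ 2 + ε y ^ (k + 1) = 0` to `x ^ 2 + ε y ^ (k + 1) = 0` by a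
homeomorphism preserving each vertical line together with its orientation.

The slope of a leaf is `O(|x| + |y| ^ N)` with `k ≤ 2 N`, while the real branches of the impasse
curve are `x ^ 2 = |ε| |y| ^ (k + 1)`. Hence `F (u, y) ^ 2 - |ε| |y| ^ (k + 1)` can only change from
positive to negative as `|y|` grows, so in each half plane where the impasse curve has real branches
the leaf through `(u, 0)` meets it exactly once, at a height depending continuously on `u` and
vanishing only for `u = 0`. These heights, for the given system and for the constant one, are
matched by a piecewise linear map of each vertical line.
-/

open Asymptotics Filter Set Topology
open scoped NNReal

/-- `c`, restricted to `J`, is a phase curve of `Y` in `V` up to an increasing change of time. -/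
def IsReparamPhaseCurve (Y : ℝ × ℝ → ℝ × ℝ) (V : Set (ℝ × ℝ)) (J : Set ℝ) (c : ℝ → ℝ × ℝ) : Prop :=
  ∃ (J' : Set ℝ) (d : ℝ → ℝ × ℝ) (τ : ℝ → ℝ), IsPhaseCurve Y V J' d ∧
    ContinuousOn τ J ∧ StrictMonoOn τ J ∧ τ '' J = J' ∧ ∀ t ∈ J, c t = d (τ t)

/-- `Φ` carries the oriented phase curves of `X` in `V` to those of `Y` in `W`: this is the
condition on `Φ` and on `Φ⁻¹` in `OrbitallyEquivAt`. -/
def MapsPhaseCurves (Φ : ℝ × ℝ → ℝ × ℝ) (X : ℝ × ℝ → ℝ × ℝ) (V : Set (ℝ × ℝ))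
    (Y : ℝ × ℝ → ℝ × ℝ) (W : Set (ℝ × ℝ)) : Prop :=
  ∀ (J : Set ℝ) (c : ℝ → ℝ × ℝ), IsPhaseCurve X V J c → IsReparamPhaseCurve Y W J (Φ ∘ c)

/-! ### Reparametrized phase curves and orbital conjugacy -/

section PhaseCurves

variable {X Y Z : ℝ × ℝ → ℝ × ℝ} {U V W V' W' : Set (ℝ × ℝ)} {J : Set ℝ} {c : ℝ → ℝ × ℝ}
  {Φ Ψ : ℝ × ℝ → ℝ × ℝ}

lemma IsPhaseCurve.of_mapsTo (h : IsPhaseCurve X V J c) (hW : MapsTo c J W) :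
    IsPhaseCurve X W J c :=
  ⟨h.1, h.2.1, hW, h.2.2.2⟩

lemma IsReparamPhaseCurve.of_mapsTo (h : IsReparamPhaseCurve Y V J c) (hW : MapsTo c J W) :
    IsReparamPhaseCurve Y W J c := by
  obtain ⟨_, d, τ, hd, hτ, hmono, rfl, hc⟩ := h
  refine ⟨_, d, τ, hd.of_mapsTo ?_, hτ, hmono, rfl, hc⟩
  rintro _ ⟨t, ht, rfl⟩
  exact hc t ht ▸ hW ht

lemma MapsPhaseCurves.comp (hΨ : MapsPhaseCurves Ψ Y V Z W) (hΦ : MapsPhaseCurves Φ X U Y V) :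
    MapsPhaseCurves (Ψ ∘ Φ) X U Z W := by
  intro J c hc
  obtain ⟨_, d, τ, hd, hτ, hτmono, rfl, hcd⟩ := hΦ J c hc
  obtain ⟨_, d', σ, hd', hσ, hσmono, rfl, hdd'⟩ := hΨ _ d hd
  refine ⟨_, d', σ ∘ τ, hd', hσ.comp hτ (mapsTo_image τ J),
    hσmono.comp hτmono (mapsTo_image τ J), image_comp σ τ J, fun t ht => ?_⟩
  exact (congrArg Ψ (hcd t ht)).trans (hdd' (τ t) (mem_image_of_mem τ ht))

lemma MapsPhaseCurves.restrict (h : MapsPhaseCurves Φ X V Y W) (hV : V' ⊆ V)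
    (hΦ : MapsTo Φ V' W') : MapsPhaseCurves Φ X V' Y W' := fun J c hc =>
  (h J c (hc.of_mapsTo fun t ht => hV (hc.2.2.1 t ht))).of_mapsTo
    fun t ht => hΦ (hc.2.2.1 t ht)

/-- The partial homeomorphism `e` identifies the oriented phase curves of `X` in its source with
those of `Y` in its target. -/
structure IsOrbitConj (e : OpenPartialHomeomorph (ℝ × ℝ) (ℝ × ℝ)) (X Y : ℝ × ℝ → ℝ × ℝ) :
    Prop where
  maps : MapsPhaseCurves e X e.source Y e.target
  maps_symm : MapsPhaseCurves e.symm Y e.target X e.source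

variable {e e' : OpenPartialHomeomorph (ℝ × ℝ) (ℝ × ℝ)}

lemma MapsPhaseCurves.trans (h : MapsPhaseCurves e X e.source Y e.target)
    (h' : MapsPhaseCurves e' Y e'.source Z e'.target) :
    MapsPhaseCurves (e.trans e') X (e.trans e').source Z (e.trans e').target := by
  have hmid : MapsTo e (e.trans e').source (e.target ∩ e'.source) := fun _ hz =>
    ⟨e.map_source hz.1, hz.2⟩
  have hend : MapsTo e' (e.target ∩ e'.source) (e.trans e').target := fun z hz => by
    rw [OpenPartialHomeomorph.trans_target]
    exact ⟨e'.map_source hz.2, by rw [mem_preimage, e'.left_inv hz.2]; exact hz.1⟩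
  exact (h'.restrict inter_subset_right hend).comp (h.restrict inter_subset_left hmid)

lemma IsOrbitConj.symm (h : IsOrbitConj e X Y) : IsOrbitConj e.symm Y X :=
  ⟨h.maps_symm, h.maps⟩

lemma IsOrbitConj.trans (h : IsOrbitConj e X Y) (h' : IsOrbitConj e' Y Z) :
    IsOrbitConj (e.trans e') X Z where
  maps := h.maps.trans h'.maps
  maps_symm := h'.maps_symm.trans h.maps_symm

lemma IsOrbitConj.restrOpen (h : IsOrbitConj e X Y) {s : Set (ℝ × ℝ)} (hs : IsOpen s) :
    IsOrbitConj (e.restrOpen s hs) X Y where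
  maps := h.maps.restrict inter_subset_left (e.restrOpen s hs).mapsTo
  maps_symm := h.maps_symm.restrict inter_subset_left (e.restrOpen s hs).symm.mapsTo

lemma IsOrbitConj.orbitallyEquivAt_of_isImage {δ γ : ℝ × ℝ → ℝ} {p : ℝ × ℝ}
    (h : IsOrbitConj e X Y) (hp : p ∈ e.source) (hδγ : e.IsImage {z | δ z = 0} {z | γ z = 0}) :
    OrbitallyEquivAt X δ p Y γ (e p) := by
  refine ⟨e.source, e.target, e, e.symm, e.open_source, e.open_target, hp, e.map_source hp,
    e.continuousOn, e.continuousOn_symm, e.mapsTo, e.symm.mapsTo, fun _ => e.left_inv,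
    fun _ => e.right_inv, rfl, ?_, ?_, ?_⟩
  · rw [inter_comm, hδγ.image_eq, inter_comm]
  · exact h.maps.restrict sdiff_subset hδγ.compl.mapsTo
  · exact h.maps_symm.restrict sdiff_subset hδγ.compl.symm_mapsTo

lemma IsOrbitConj.orbitallyEquivAt {δ γ : ℝ × ℝ → ℝ} {p : ℝ × ℝ} (h : IsOrbitConj e X Y)
    (hp : p ∈ e.source) (hδγ : ∀ᶠ z in 𝓝 p, γ (e z) = 0 ↔ δ z = 0) :
    OrbitallyEquivAt X δ p Y γ (e p) := by
  obtain ⟨O, hO, hOopen, hpO⟩ := eventually_nhds_iff.1 hδγ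
  exact (h.restrOpen hOopen).orbitallyEquivAt_of_isImage ⟨hp, hpO⟩ fun z hz => hO z hz.2

end PhaseCurves

lemma eqOn_of_hasDerivWithinAt_of_lipschitzOnWith {E : Type*} [NormedAddCommGroup E]
    [NormedSpace ℝ E] {v : ℝ → E → E} {s : ℝ → Set E} {K : ℝ≥0} {f g : ℝ → E} {J : Set ℝ} {t₀ : ℝ}
    (hJ : J.OrdConnected) (hv : ∀ t ∈ J, LipschitzOnWith K (v t) (s t))
    (hf : ∀ t ∈ J, HasDerivWithinAt f (v t (f t)) J t) (hfs : ∀ t ∈ J, f t ∈ s t)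
    (hg : ∀ t ∈ J, HasDerivWithinAt g (v t (g t)) J t) (hgs : ∀ t ∈ J, g t ∈ s t)
    (ht₀ : t₀ ∈ J) (h₀ : f t₀ = g t₀) : EqOn f g J := by
  intro t ht
  have continuousOn {h : ℝ → E} (hh : ∀ t ∈ J, HasDerivWithinAt h (v t (h t)) J t) {a b : ℝ}
      (hab : Icc a b ⊆ J) : ContinuousOn h (Icc a b) := fun s hs =>
    (hh s (hab hs)).continuousWithinAt.mono hab
  rcases le_total t₀ t with hle | hle
  · have hsub : Icc t₀ t ⊆ J := hJ.out ht₀ ht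
    have hnhds {s : ℝ} (hs : s ∈ Ico t₀ t) : J ∈ 𝓝[≥] s :=
      mem_of_superset (Icc_mem_nhdsGE hs.2) ((Icc_subset_Icc_left hs.1).trans hsub)
    have hmem {s : ℝ} (hs : s ∈ Ico t₀ t) : s ∈ J := hsub (Ico_subset_Icc_self hs)
    exact ODE_solution_unique_of_mem_Icc_right (fun s hs => hv s (hmem hs))
      (continuousOn hf hsub) (fun s hs => (hf s (hmem hs)).mono_of_mem_nhdsWithin (hnhds hs))
      (fun s hs => hfs s (hmem hs))
      (continuousOn hg hsub) (fun s hs => (hg s (hmem hs)).mono_of_mem_nhdsWithin (hnhds hs))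
      (fun s hs => hgs s (hmem hs)) h₀ (right_mem_Icc.2 hle)
  · have hsub : Icc t t₀ ⊆ J := hJ.out ht ht₀
    have hnhds {s : ℝ} (hs : s ∈ Ioc t t₀) : J ∈ 𝓝[≤] s :=
      mem_of_superset (Icc_mem_nhdsLE hs.1) ((Icc_subset_Icc_right hs.2).trans hsub)
    have hmem {s : ℝ} (hs : s ∈ Ioc t t₀) : s ∈ J := hsub (Ioc_subset_Icc_self hs)
    exact ODE_solution_unique_of_mem_Icc_left (fun s hs => hv s (hmem hs))
      (continuousOn hf hsub) (fun s hs => (hf s (hmem hs)).mono_of_mem_nhdsWithin (hnhds hs))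
      (fun s hs => hfs s (hmem hs))
      (continuousOn hg hsub) (fun s hs => (hg s (hmem hs)).mono_of_mem_nhdsWithin (hnhds hs))
      (fun s hs => hgs s (hmem hs)) h₀ (left_mem_Icc.2 hle)

section Reparametrization

lemma exists_orderIso_hasDerivAt {w : ℝ → ℝ} {m : ℝ} (hw : Continuous w) (hm : 0 < m)
    (hmw : ∀ t, m ≤ w t) : ∃ τ : ℝ ≃o ℝ, ∀ t, HasDerivAt τ (w t) t := by
  have hderiv (t : ℝ) : HasDerivAt (fun t => ∫ s in (0 : ℝ)..t, w s) (w t) t :=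
    hw.integral_hasStrictDerivAt 0 t |>.hasDerivAt
  set T : ℝ → ℝ := fun t => ∫ s in (0 : ℝ)..t, w s
  have hmono : StrictMono T := strictMono_of_hasDerivAt_pos hderiv fun t => hm.trans_le (hmw t)
  have hgrowth : Monotone fun t => T t - m * t :=
    monotone_of_hasDerivAt_nonneg (fun t => (hderiv t).sub ((hasDerivAt_id t).const_mul m))
      fun t => by simpa using hmw t
  have hT0 : T 0 = 0 := intervalIntegral.integral_same
  have htop : Tendsto T atTop atTop := by
    refine tendsto_atTop_mono' _ ?_ (tendsto_id.const_mul_atTop hm)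
    filter_upwards [eventually_ge_atTop 0] with t ht
    simpa [hT0] using hgrowth ht
  have hbot : Tendsto T atBot atBot := by
    refine tendsto_atBot_mono' _ ?_ (tendsto_id.const_mul_atBot hm)
    filter_upwards [eventually_le_atBot 0] with t ht
    simpa [hT0] using hgrowth ht
  have hcont : Continuous T := continuous_iff_continuousAt.2 fun t => (hderiv t).continuousAt
  exact ⟨hmono.orderIsoOfSurjective T (hcont.surjective htop hbot), hderiv⟩

variable {V : Set (ℝ × ℝ)} {J : Set ℝ}

lemma isReparamPhaseCurve_of_hasDerivWithinAt_smul {X : ℝ × ℝ → ℝ × ℝ} {c : ℝ → ℝ × ℝ}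
    {w : ℝ → ℝ} {m : ℝ} (hJ : J.OrdConnected) (hJ' : J.Nontrivial) (hV : MapsTo c J V)
    (hw : Continuous w) (hm : 0 < m) (hmw : ∀ t, m ≤ w t)
    (hc : ∀ t ∈ J, HasDerivWithinAt c (w t • X (c t)) J t) : IsReparamPhaseCurve X V J c := by
  obtain ⟨τ, hτ⟩ := exists_orderIso_hasDerivAt hw hm hmw
  refine ⟨τ '' J, c ∘ τ.symm, τ,
    ⟨ordConnected_image τ, hJ'.image τ.injective, ?_, ?_⟩, τ.continuous.continuousOn,
    τ.strictMono.strictMonoOn J, rfl, fun t _ => by simp⟩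
  · rintro _ ⟨t, ht, rfl⟩
    simpa using hV ht
  · rintro _ ⟨t, ht, rfl⟩
    have hpos : w t ≠ 0 := (hm.trans_le (hmw t)).ne'
    have hsymm : HasDerivAt τ.symm (w t)⁻¹ (τ t) :=
      HasDerivAt.of_local_left_inverse τ.symm.continuous.continuousAt (by simpa using hτ t) hpos
        (.of_forall τ.apply_symm_apply)
    have hcomp := HasDerivWithinAt.scomp (τ t) (t' := J) (h := τ.symm) (g₁ := c)
      (by simpa using hc t ht)
      hsymm.hasDerivWithinAt fun s hs => (mem_image_equiv (f := τ.toEquiv)).1 hs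
    simpa [smul_smul, hpos] using hcomp

/-- The constant vector field `(0, q)`. -/
def verticalField (q : ℝ) : ℝ × ℝ → ℝ × ℝ := fun _ => (0, q)

lemma IsPhaseCurve.eq_of_verticalField {q : ℝ} {d : ℝ → ℝ × ℝ} {t₀ t : ℝ}
    (hd : IsPhaseCurve (verticalField q) V J d) (ht₀ : t₀ ∈ J) (ht : t ∈ J) :
    d t = ((d t₀).1, (d t₀).2 + (t - t₀) * q) := by
  have hline (t : ℝ) : HasDerivAt (fun t => ((d t₀).1, (d t₀).2 + (t - t₀) * q)) (0, q) t := by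
    refine (hasDerivAt_const t _).prodMk ?_
    simpa using (((hasDerivAt_id t).sub_const t₀).mul_const q).const_add (d t₀).2
  exact eqOn_of_hasDerivWithinAt_of_lipschitzOnWith (v := fun _ => verticalField q)
    (s := fun _ => univ) (K := 0) hd.1 (fun _ _ => (LipschitzWith.const _).lipschitzOnWith)
    hd.2.2.2 (fun _ _ => mem_univ _) (fun t _ => (hline t).hasDerivWithinAt)
    (fun _ _ => mem_univ _) ht₀ (by simp) ht

lemma isReparamPhaseCurve_verticalField {q u : ℝ} {c : ℝ → ℝ × ℝ} (hq : q ≠ 0)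
    (hJ : J.OrdConnected) (hJ' : J.Nontrivial) (hV : MapsTo c J V) (hc : ContinuousOn c J)
    (hfst : ∀ t ∈ J, (c t).1 = u) (hsnd : StrictMonoOn (fun t => q * (c t).2) J) :
    IsReparamPhaseCurve (verticalField q) V J c := by
  have hcurve (t : ℝ) (ht : t ∈ J) : c t = (u, q * ((c t).2 / q)) :=
    Prod.ext (hfst t ht) (mul_div_cancel₀ _ hq).symm
  have hτ : ContinuousOn (fun t => (c t).2 / q) J := hc.snd.div_const q
  have hτmono : StrictMonoOn (fun t => (c t).2 / q) J := fun s hs t ht hst => by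
    have hq2 : 0 < q * q := mul_self_pos.2 hq
    refine lt_of_mul_lt_mul_left ?_ hq2.le
    simpa only [mul_assoc, mul_div_cancel₀ _ hq] using hsnd hs ht hst
  refine ⟨_, fun s => (u, q * s), _, ⟨?_, hJ'.image_of_injOn hτmono.injOn, ?_, ?_⟩, hτ, hτmono,
    rfl, hcurve⟩
  · exact (hJ.isPreconnected.image _ hτ).ordConnected
  · rintro _ ⟨t, ht, rfl⟩
    simpa only [← hcurve t ht] using hV ht
  · exact fun s _ => ((hasDerivAt_const s u).prodMk
      (by simpa using (hasDerivAt_id s).const_mul q)).hasDerivWithinAt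

lemma mapsPhaseCurves_verticalField {q : ℝ} {S : ℝ × ℝ → ℝ × ℝ} (hq : q ≠ 0) (hS : Continuous S)
    (hfst : ∀ z, (S z).1 = z.1) (hsnd : ∀ u, StrictMono fun y => (S (u, y)).2) :
    MapsPhaseCurves S (verticalField q) univ (verticalField q) univ := by
  intro J d hd
  obtain ⟨t₀, ht₀⟩ := hd.2.1.nonempty
  have hdt (t : ℝ) (ht : t ∈ J) := hd.eq_of_verticalField ht₀ ht
  refine isReparamPhaseCurve_verticalField hq hd.1 hd.2.1 (mapsTo_univ _ _)
    (hS.comp_continuousOn fun t ht => (hd.2.2.2 t ht).continuousWithinAt)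
    (fun t ht => by rw [Function.comp_apply, hfst, hdt t ht]) fun s hs t ht hst => ?_
  simp only [Function.comp_apply, hdt s hs, hdt t ht]
  rcases hq.lt_or_gt with hneg | hpos
  · exact mul_lt_mul_of_neg_left (hsnd _ (by nlinarith)) hneg
  · exact mul_lt_mul_of_pos_left (hsnd _ (by nlinarith)) hpos

lemma isOrbitConj_verticalField {q : ℝ} (hq : q ≠ 0) (S : (ℝ × ℝ) ≃ₜ ℝ × ℝ)
    (hfst : ∀ z, (S z).1 = z.1) (hsnd : ∀ u, StrictMono fun y => (S (u, y)).2) :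
    IsOrbitConj S.toOpenPartialHomeomorph (verticalField q) (verticalField q) where
  maps := mapsPhaseCurves_verticalField hq S.continuous hfst hsnd
  maps_symm := by
    have hfst' (z : ℝ × ℝ) : (S.symm z).1 = z.1 := by
      simpa using (hfst (S.symm z)).symm
    refine mapsPhaseCurves_verticalField hq S.symm.continuous hfst' fun u y₁ y₂ hy => ?_
    have hS (y : ℝ) : S (u, (S.symm (u, y)).2) = (u, y) := by
      rw [← S.eq_symm_apply]
      exact Prod.ext (hfst' (u, y)).symm rfl
    refine (hsnd u).lt_iff_lt.1 ?_
    change (S (u, (S.symm (u, y₁)).2)).2 < (S (u, (S.symm (u, y₂)).2)).2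
    simpa only [hS] using hy

end Reparametrization

/-! ### Flow boxes -/

section FlowBox

lemma exists_openPartialHomeomorph_of_isCompact {X Y : Type*} [TopologicalSpace X] [Nonempty X]
    [TopologicalSpace Y] [T2Space Y] {f : X → Y} {K s : Set X} (hK : IsCompact K)
    (hf : ContinuousOn f K) (hinj : InjOn f K) (hsK : s ⊆ K) (hs : IsOpen s)
    (hfs : IsOpen (f '' s)) : ∃ e : OpenPartialHomeomorph X Y, e.source = s ∧ ⇑e = f := by
  have hopen : IsOpenMap (s.domRestrict f) := by
    intro U hU
    have hU' : IsOpen (Subtype.val '' U) := hs.isOpenMap_subtype_val U hU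
    have hUs : Subtype.val '' U ⊆ s := Subtype.coe_image_subset s U
    have himage : s.domRestrict f '' U = f '' s \ f '' (K \ Subtype.val '' U) := by
      rw [domRestrict_eq, image_comp, hinj.image_sdiff_subset (hUs.trans hsK)]
      have hs' : f '' s ⊆ f '' K := image_mono hsK
      have hU's : f '' (Subtype.val '' U) ⊆ f '' s := image_mono hUs
      grind
    rw [himage]
    exact hfs.sdiff ((hK.diff hU').image_of_continuousOn (hf.mono sdiff_subset)).isClosed
  exact ⟨.ofContinuousOpenRestrict ((hinj.mono hsK).toPartialEquiv f s) (hf.mono hsK) hopen hs,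
    rfl, rfl⟩

variable {a b c d : ℝ} {F : ℝ × ℝ → ℝ}

lemma injOn_prodMk_snd (hmono : ∀ y ∈ Icc c d, StrictMonoOn (fun u => F (u, y)) (Icc a b)) :
    InjOn (fun z => (F z, z.2)) (Icc a b ×ˢ Icc c d) := by
  rintro ⟨u, y⟩ hz ⟨u', y'⟩ hz' h
  obtain ⟨hF, rfl⟩ : F (u, y) = F (u', y') ∧ y = y' := Prod.mk_inj.1 h
  exact congrArg (·, y) ((hmono y hz.2).injOn hz.1 hz'.1 hF)

lemma image_prodMk_snd_Ioo (hab : a ≤ b) (hF : ContinuousOn F (Icc a b ×ˢ Icc c d))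
    (hmono : ∀ y ∈ Icc c d, StrictMonoOn (fun u => F (u, y)) (Icc a b)) :
    (fun z => (F z, z.2)) '' (Ioo a b ×ˢ Ioo c d) =
      {z | z.2 ∈ Ioo c d ∧ z.1 ∈ Ioo (F (a, z.2)) (F (b, z.2))} := by
  ext ⟨x, y⟩
  constructor
  · rintro ⟨⟨u, y⟩, ⟨hu, hy⟩, h⟩
    obtain ⟨rfl, rfl⟩ := Prod.mk_inj.1 h
    have hmono_y := hmono y (Ioo_subset_Icc_self hy)
    exact ⟨hy, hmono_y (left_mem_Icc.2 hab) (Ioo_subset_Icc_self hu) hu.1,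
      hmono_y (Ioo_subset_Icc_self hu) (right_mem_Icc.2 hab) hu.2⟩
  · rintro ⟨hy, hx⟩
    have hFy : ContinuousOn (fun u => F (u, y)) (Icc a b) :=
      hF.comp (by fun_prop) fun u hu => ⟨hu, Ioo_subset_Icc_self hy⟩
    obtain ⟨u, hu, rfl⟩ := intermediate_value_Ioo hab hFy hx
    exact ⟨(u, y), ⟨hu, hy⟩, rfl⟩

lemma isOpen_image_prodMk_snd_Ioo (hab : a ≤ b) (hF : ContinuousOn F (Icc a b ×ˢ Icc c d))
    (hmono : ∀ y ∈ Icc c d, StrictMonoOn (fun u => F (u, y)) (Icc a b)) :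
    IsOpen ((fun z => (F z, z.2)) '' (Ioo a b ×ˢ Ioo c d)) := by
  have hedge {u : ℝ} (hu : u ∈ Icc a b) :
      ContinuousOn (fun z : ℝ × ℝ => F (u, z.2)) (Prod.snd ⁻¹' Ioo c d) :=
    hF.comp (by fun_prop) fun z hz => ⟨hu, Ioo_subset_Icc_self hz⟩
  have hcont : ContinuousOn (fun z : ℝ × ℝ => (z.1 - F (a, z.2), F (b, z.2) - z.1))
      (Prod.snd ⁻¹' Ioo c d) :=
    (continuousOn_fst.sub (hedge (left_mem_Icc.2 hab))).prodMk
      ((hedge (right_mem_Icc.2 hab)).sub continuousOn_fst)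
  rw [image_prodMk_snd_Ioo hab hF hmono]
  convert hcont.isOpen_inter_preimage (isOpen_Ioo.preimage continuous_snd)
    (isOpen_Ioi.prod isOpen_Ioi : IsOpen (Ioi (0 : ℝ) ×ˢ Ioi (0 : ℝ))) using 1
  ext z
  simp

lemma exists_chart_of_strictMonoOn (hab : a ≤ b) (hF : ContinuousOn F (Icc a b ×ˢ Icc c d))
    (hmono : ∀ y ∈ Icc c d, StrictMonoOn (fun u => F (u, y)) (Icc a b)) :
    ∃ e : OpenPartialHomeomorph (ℝ × ℝ) (ℝ × ℝ),
      e.source = Ioo a b ×ˢ Ioo c d ∧ ⇑e = fun z => (F z, z.2) :=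
  exists_openPartialHomeomorph_of_isCompact (isCompact_Icc.prod isCompact_Icc)
    (hF.prodMk continuousOn_snd) (injOn_prodMk_snd hmono)
    (prod_mono Ioo_subset_Icc_self Ioo_subset_Icc_self) (isOpen_Ioo.prod isOpen_Ioo)
    (isOpen_image_prodMk_snd_Ioo hab hF hmono)

/-- The closed square of half-side `r` centred at the origin. -/
abbrev box (r : ℝ) : Set (ℝ × ℝ) := Icc (-r) r ×ˢ Icc (-r) r

/-- `y ↦ F (u, y)` are the solutions in `D` of `dx/dy = R (x, y)` with value `u` at `y = 0`, for
`|u| ≤ r` and `|y| ≤ r`. -/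
structure IsLeafFlow (R : ℝ × ℝ → ℝ) (D : Set (ℝ × ℝ)) (F : ℝ × ℝ → ℝ) (r : ℝ) : Prop where
  continuousOn : ContinuousOn F (box r)
  apply_zero : ∀ u ∈ Icc (-r) r, F (u, 0) = u
  mem : ∀ z ∈ box r, (F z, z.2) ∈ D
  hasDerivWithinAt : ∀ z ∈ box r,
    HasDerivWithinAt (fun y => F (z.1, y)) (R (F z, z.2)) (Icc (-r) r) z.2

variable {R : ℝ × ℝ → ℝ} {K : ℝ≥0} {r ρ : ℝ} {D : Set (ℝ × ℝ)}

lemma lipschitzOnWith_comp_prodMk_right (hR : LipschitzOnWith K R D) (y : ℝ) :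
    LipschitzOnWith K (fun x => R (x, y)) {x | (x, y) ∈ D} :=
  LipschitzOnWith.of_dist_le_mul fun x hx x' hx' => by
    simpa [Prod.dist_eq] using hR.dist_le_mul (x, y) hx (x', y) hx'

lemma mem_box_iff {z : ℝ × ℝ} : z ∈ box r ↔ |z.1| ≤ r ∧ |z.2| ≤ r := by
  simp only [mem_prod, mem_Icc, abs_le]

lemma isPicardLindelof_of_lipschitzOnWith_box {T : ℝ} {L ρ : ℝ≥0} (hT : 0 ≤ T) (hTρ : T ≤ ρ)
    (hR : LipschitzOnWith K R (box ρ)) (hL : ∀ z ∈ box ρ, ‖R z‖ ≤ L) (hLT : L * T ≤ ρ / 2) :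
    IsPicardLindelof (fun y x => R (x, y)) (tmin := -T) (tmax := T)
      ⟨0, neg_nonpos.2 hT, hT⟩ 0 ρ (ρ / 2) L K := by
  have hmem {x y : ℝ} (hx : x ∈ Metric.closedBall 0 (ρ : ℝ)) (hy : y ∈ Icc (-T) T) :
      (x, y) ∈ box ρ := by
    rw [mem_closedBall_zero_iff, Real.norm_eq_abs] at hx
    exact mem_box_iff.2 ⟨hx, (abs_le.2 hy).trans hTρ⟩
  refine ⟨fun y hy => (lipschitzOnWith_comp_prodMk_right hR y).mono fun x hx => hmem hx hy,
    fun x hx => hR.continuousOn.comp (by fun_prop) fun y hy => hmem hx hy,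
    fun y hy x hx => hL _ (hmem hx hy), ?_⟩
  simp only [sub_zero, zero_sub, neg_neg, max_self, NNReal.coe_div, NNReal.coe_ofNat]
  linarith

lemma exists_isLeafFlow_univ (hρ : 0 < ρ) (hR : LipschitzOnWith K R (box ρ)) :
    ∃ F, ∃ r > 0, IsLeafFlow R univ F r := by
  lift ρ to ℝ≥0 using hρ.le
  obtain ⟨L, hL⟩ := (isCompact_Icc.prod isCompact_Icc).exists_bound_of_continuousOn
    hR.continuousOn
  have hL0 : 0 ≤ L := (norm_nonneg _).trans (hL 0 (mem_box_iff.2 (by simp)))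
  lift L to ℝ≥0 using hL0
  set T : ℝ := min ρ (ρ / 2 / (L + 1))
  have hT : 0 < T := by positivity
  have hLT : L * T ≤ ρ / 2 :=
    calc L * T ≤ (L + 1) * (ρ / 2 / (L + 1)) := by gcongr; exacts [by simp, min_le_right _ _]
      _ = ρ / 2 := by field_simp
  obtain ⟨F, hF, hFcont⟩ := (isPicardLindelof_of_lipschitzOnWith_box hT.le (min_le_left _ _) hR hL
    hLT).exists_forall_mem_closedBall_eq_hasDerivWithinAt_continuousOn
  set r : ℝ := min T (ρ / 2)
  have hball {u : ℝ} (hu : u ∈ Icc (-r) r) : u ∈ Metric.closedBall 0 ((ρ / 2 : ℝ≥0) : ℝ) := by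
    simpa using (abs_le.2 hu).trans (min_le_right _ _)
  have htime : Icc (-r) r ⊆ Icc (-T) T :=
    Icc_subset_Icc (neg_le_neg (min_le_left _ _)) (min_le_left _ _)
  exact ⟨F, r, by positivity, hFcont.mono fun z hz => ⟨hball hz.1, htime hz.2⟩,
    fun u hu => (hF u (hball hu)).1, fun _ _ => mem_univ _,
    fun z hz => ((hF z.1 (hball hz.1)).2 z.2 (htime hz.2)).mono htime⟩

lemma box_mem_nhds (hr : 0 < r) : box r ∈ 𝓝 (0, 0) :=
  have := Icc_mem_nhds (neg_neg_of_pos hr) hr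
  prod_mem_nhds this this

lemma exists_box_subset {s : Set (ℝ × ℝ)} (hs : s ∈ 𝓝 (0, 0)) : ∃ r > 0, box r ⊆ s := by
  obtain ⟨r, hr, hrs⟩ := Metric.nhds_basis_closedBall.mem_iff.1 hs
  refine ⟨r, hr, fun z hz => hrs ?_⟩
  rw [Metric.mem_closedBall, Prod.dist_eq, Real.dist_0_eq_abs, Real.dist_0_eq_abs]
  exact max_le_iff.2 (mem_box_iff.1 hz)

lemma IsLeafFlow.exists_shrink (h : IsLeafFlow R univ F r) (hr : 0 < r) (hD : D ∈ 𝓝 (0, 0)) :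
    ∃ r > 0, IsLeafFlow R D F r := by
  have h0 : (0 : ℝ) ∈ Icc (-r) r := ⟨neg_nonpos.2 hr.le, hr.le⟩
  have hcont : ContinuousAt (fun z => (F z, z.2)) (0, 0) :=
    (h.continuousOn.continuousAt (box_mem_nhds hr)).prodMk continuousAt_snd
  have hnhds : {z | (F z, z.2) ∈ D} ∈ 𝓝 (0, 0) :=
    hcont.preimage_mem_nhds (by simpa only [h.apply_zero 0 h0] using hD)
  obtain ⟨r', hr', hsub⟩ := exists_box_subset (inter_mem (box_mem_nhds hr) hnhds)
  have hIcc : Icc (-r') r' ⊆ Icc (-r) r := fun y hy =>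
    (hsub (⟨hy, hy⟩ : (y, y) ∈ box r')).1.1
  exact ⟨r', hr', h.continuousOn.mono fun z hz => (hsub hz).1,
    fun u hu => h.apply_zero u (hIcc hu), fun z hz => (hsub hz).2,
    fun z hz => (h.hasDerivWithinAt z (hsub hz).1).mono hIcc⟩

lemma exists_isLeafFlow (hR : LipschitzOnWith K R D) (hD : D ∈ 𝓝 (0, 0)) :
    ∃ F, ∃ r > 0, IsLeafFlow R D F r := by
  obtain ⟨ρ, hρ, hbox⟩ := exists_box_subset hD
  obtain ⟨F, r, hr, hF⟩ := exists_isLeafFlow_univ hρ (hR.mono hbox)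
  exact ⟨F, hF.exists_shrink hr hD⟩

lemma IsLeafFlow.strictMonoOn (h : IsLeafFlow R D F r) (hR : LipschitzOnWith K R D) {y : ℝ}
    (hy : y ∈ Icc (-r) r) : StrictMonoOn (fun u => F (u, y)) (Icc (-r) r) := by
  intro u₁ hu₁ u₂ hu₂ hu
  have h0 : (0 : ℝ) ∈ Icc (-r) r := by
    constructor <;> linarith [hy.1, hy.2]
  have hcont {u : ℝ} (hu : u ∈ Icc (-r) r) : ContinuousOn (fun y => F (u, y)) (Icc (-r) r) :=
    h.continuousOn.comp (by fun_prop) fun y hy => ⟨hu, hy⟩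
  have hne (s : ℝ) (hs : s ∈ Icc (-r) r) : F (u₁, s) ≠ F (u₂, s) := by
    intro heq
    have : F (u₁, 0) = F (u₂, 0) := eqOn_of_hasDerivWithinAt_of_lipschitzOnWith
      (f := fun y => F (u₁, y)) (g := fun y => F (u₂, y)) ordConnected_Icc
      (fun y _ => lipschitzOnWith_comp_prodMk_right hR y)
      (fun y hy => h.hasDerivWithinAt (u₁, y) ⟨hu₁, hy⟩) (fun y hy => h.mem (u₁, y) ⟨hu₁, hy⟩)
      (fun y hy => h.hasDerivWithinAt (u₂, y) ⟨hu₂, hy⟩) (fun y hy => h.mem (u₂, y) ⟨hu₂, hy⟩)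
      hs heq h0
    rw [h.apply_zero _ hu₁, h.apply_zero _ hu₂] at this
    exact hu.ne this
  by_contra! hle
  obtain ⟨s, hs, heq⟩ := isPreconnected_Icc.intermediate_value₂ h0 hy (hcont hu₁) (hcont hu₂)
    (by simpa only [h.apply_zero _ hu₁, h.apply_zero _ hu₂] using hu.le) hle
  exact hne s hs heq

end FlowBox

section FlowBoxConj

variable {P Q F : ℝ × ℝ → ℝ} {D : Set (ℝ × ℝ)} {K M : ℝ≥0} {q r : ℝ}
  {e : OpenPartialHomeomorph (ℝ × ℝ) (ℝ × ℝ)}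

/-- On `D` the field `(P, Q)` is transverse to the horizontal direction, with the orientation of
`(0, q)`, and its slope `P / Q` is Lipschitz; `M` bounds the speed `|Q|`. -/
structure IsTransverseOn (P Q : ℝ × ℝ → ℝ) (q : ℝ) (K M : ℝ≥0) (D : Set (ℝ × ℝ)) : Prop where
  lipschitzOnWith : LipschitzOnWith K (fun z => P z / Q z) D
  continuousOn : ContinuousOn Q D
  norm_le : ∀ z ∈ D, ‖Q z‖ ≤ M
  mul_pos : ∀ z ∈ D, 0 < q * Q z

lemma IsTransverseOn.mono {D' : Set (ℝ × ℝ)} (h : IsTransverseOn P Q q K M D) (hD : D' ⊆ D) :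
    IsTransverseOn P Q q K M D' :=
  ⟨h.lipschitzOnWith.mono hD, h.continuousOn.mono hD, fun z hz => h.norm_le z (hD hz),
    fun z hz => h.mul_pos z (hD hz)⟩

lemma IsTransverseOn.ne_zero (h : IsTransverseOn P Q q K M D) {z : ℝ × ℝ} (hz : z ∈ D) :
    Q z ≠ 0 := right_ne_zero_of_mul (h.mul_pos z hz).ne'

lemma IsTransverseOn.le_div (h : IsTransverseOn P Q q K M D) {z : ℝ × ℝ} (hz : z ∈ D) :
    |q| / M ≤ q / Q z := by
  have hq : q / Q z = |q| / ‖Q z‖ := by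
    rw [Real.norm_eq_abs, ← abs_div, abs_of_pos (div_pos_iff.2 (mul_pos_iff.1 (h.mul_pos z hz)))]
  rw [hq]
  exact div_le_div_of_nonneg_left (abs_nonneg q) (norm_pos_iff.2 (h.ne_zero hz)) (h.norm_le z hz)

lemma IsTransverseOn.exists_clock (hT : IsTransverseOn P Q q K M D) (hr : 0 ≤ r) (hq : q ≠ 0)
    (hF : IsLeafFlow (fun z => P z / Q z) D F r) {u : ℝ} (hu : u ∈ Icc (-r) r) :
    ∃ w : ℝ → ℝ, ∃ m > 0, Continuous w ∧ (∀ y, m ≤ w y) ∧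
      ∀ y ∈ Icc (-r) r, w y = q / Q (F (u, y), y) := by
  have hIcc : -r ≤ r := (neg_nonpos.2 hr).trans hr
  have hmem (y : Icc (-r) r) : (F (u, y), (y : ℝ)) ∈ D := hF.mem (u, y) ⟨hu, y.2⟩
  have hcont : Continuous fun y : Icc (-r) r => q / Q (F (u, y), y) := by
    have hFu : Continuous fun y : Icc (-r) r => F (u, y) :=
      hF.continuousOn.comp_continuous (by fun_prop) fun y => ⟨hu, y.2⟩
    exact continuous_const.div
      (hT.continuousOn.comp_continuous (hFu.prodMk continuous_subtype_val) hmem)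
      fun y => hT.ne_zero (hmem y)
  have hM : (0 : ℝ) < M :=
    (norm_pos_iff.2 (hT.ne_zero (hmem ⟨0, neg_nonpos.2 hr, hr⟩))).trans_le (hT.norm_le _ (hmem _))
  exact ⟨IccExtend hIcc fun y => q / Q (F (u, y), y), |q| / M, div_pos (abs_pos.2 hq) hM,
    hcont.Icc_extend', fun y => hT.le_div (hmem _), fun y hy => IccExtend_of_mem hIcc _ hy⟩

lemma IsLeafFlow.hasDerivWithinAt_comp {R : ℝ × ℝ → ℝ} (hF : IsLeafFlow R D F r) {J : Set ℝ}
    {u v t : ℝ} {y : ℝ → ℝ} (hu : u ∈ Icc (-r) r) (hy : MapsTo y J (Icc (-r) r)) (ht : t ∈ J)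
    (hyt : HasDerivWithinAt y v J t) :
    HasDerivWithinAt (fun t => F (u, y t)) (R (F (u, y t), y t) * v) J t :=
  (hF.hasDerivWithinAt (u, y t) ⟨hu, hy ht⟩).comp t hyt hy

lemma mapsPhaseCurves_chart (hT : IsTransverseOn P Q q K M D) (hr : 0 ≤ r) (hq : q ≠ 0)
    (hF : IsLeafFlow (fun z => P z / Q z) D F r) (hsource : e.source ⊆ box r)
    (he : ⇑e = fun z => (F z, z.2)) :
    MapsPhaseCurves e (verticalField q) e.source (fun z => (P z, Q z)) e.target := by
  intro J d hd
  obtain ⟨t₀, ht₀⟩ := hd.2.1.nonempty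
  have hbox (t : ℝ) (ht : t ∈ J) : d t ∈ box r := hsource (hd.2.2.1 t ht)
  set u := (d t₀).1
  have hu : u ∈ Icc (-r) r := (hbox t₀ ht₀).1
  have hdt (t : ℝ) (ht : t ∈ J) : d t = (u, (d t₀).2 + (t - t₀) * q) :=
    hd.eq_of_verticalField ht₀ ht
  have hed (t : ℝ) (ht : t ∈ J) : (e ∘ d) t = (F (u, (d t).2), (d t).2) := by
    rw [Function.comp_apply, he, hdt t ht]
  obtain ⟨w, m, hm, hw, hmw, hwy⟩ := hT.exists_clock hr hq hF hu
  refine isReparamPhaseCurve_of_hasDerivWithinAt_smul (w := fun t => w ((d t₀).2 + (t - t₀) * q))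
    hd.1 hd.2.1 (fun t ht => e.map_source (hd.2.2.1 t ht)) (by fun_prop) hm
    (fun t => hmw _) fun t ht => ?_
  have hy : HasDerivWithinAt (fun t => (d t).2) q J t := (hd.2.2.2 t ht).snd
  have hderiv := (hF.hasDerivWithinAt_comp hu (fun t ht => (hbox t ht).2) ht hy).prodMk hy
  refine (hderiv.congr hed (hed t ht)).congr_deriv ?_
  have hQ : Q (F (u, (d t).2), (d t).2) ≠ 0 :=
    hT.ne_zero (hF.mem (u, (d t).2) ⟨hu, (hbox t ht).2⟩)
  have hwt : w ((d t₀).2 + (t - t₀) * q) = q / Q (F (u, (d t).2), (d t).2) := by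
    rw [← hwy _ (hbox t ht).2, hdt t ht]
  rw [hed t ht, hwt, Prod.smul_mk, smul_eq_mul, smul_eq_mul, div_mul_cancel₀ _ hQ]
  exact Prod.ext (by ring) rfl

lemma IsLeafFlow.apply_eq_of_isPhaseCurve (hF : IsLeafFlow (fun z => P z / Q z) D F r)
    (hT : IsTransverseOn P Q q K M D) {J : Set ℝ} {V : Set (ℝ × ℝ)} {c : ℝ → ℝ × ℝ}
    (hc : IsPhaseCurve (fun z => (P z, Q z)) V J c) (hD : MapsTo c J D)
    (hbox : ∀ t ∈ J, (c t).2 ∈ Icc (-r) r) {u t₀ : ℝ} (hu : u ∈ Icc (-r) r) (ht₀ : t₀ ∈ J)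
    (h₀ : F (u, (c t₀).2) = (c t₀).1) : ∀ t ∈ J, F (u, (c t).2) = (c t).1 := by
  have hLip (t : ℝ) (ht : t ∈ J) : LipschitzOnWith (M * K)
      (fun x => Q (c t) * (P (x, (c t).2) / Q (x, (c t).2))) {x | (x, (c t).2) ∈ D} := by
    have hR := lipschitzOnWith_comp_prodMk_right hT.lipschitzOnWith (c t).2
    refine LipschitzOnWith.of_dist_le_mul fun x hx x' hx' => ?_
    rw [Real.dist_eq, ← mul_sub, abs_mul, NNReal.coe_mul, mul_assoc]
    exact mul_le_mul (hT.norm_le _ (hD ht)) (hR.dist_le_mul x hx x' hx') (abs_nonneg _) M.2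
  have hx (t : ℝ) (ht : t ∈ J) : HasDerivWithinAt (fun t => (c t).1)
      (Q (c t) * (P (c t) / Q (c t))) J t := by
    rw [mul_div_cancel₀ _ (hT.ne_zero (hD ht))]
    exact (hc.2.2.2 t ht).fst
  refine eqOn_of_hasDerivWithinAt_of_lipschitzOnWith (f := fun t => F (u, (c t).2))
    (g := fun t => (c t).1) hc.1 hLip (fun t ht => ?_)
    (fun t ht => hF.mem (u, (c t).2) ⟨hu, hbox t ht⟩) hx hD ht₀ h₀
  rw [mul_comm]
  exact hF.hasDerivWithinAt_comp hu hbox ht (hc.2.2.2 t ht).snd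

lemma mapsPhaseCurves_chart_symm (hT : IsTransverseOn P Q q K M D) (hq : q ≠ 0)
    (hF : IsLeafFlow (fun z => P z / Q z) D F r) (hsource : e.source ⊆ box r)
    (he : ⇑e = fun z => (F z, z.2)) :
    MapsPhaseCurves e.symm (fun z => (P z, Q z)) e.target (verticalField q) e.source := by
  intro J c hc
  obtain ⟨t₀, ht₀⟩ := hc.2.1.nonempty
  have hV (t : ℝ) (ht : t ∈ J) : c t ∈ e.target := hc.2.2.1 t ht
  have hbox (t : ℝ) (ht : t ∈ J) : e.symm (c t) ∈ box r := hsource (e.map_target (hV t ht))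
  have hright (t : ℝ) (ht : t ∈ J) : (F (e.symm (c t)), (e.symm (c t)).2) = c t := by
    simpa only [he] using e.right_inv (hV t ht)
  have hsnd (t : ℝ) (ht : t ∈ J) : (e.symm (c t)).2 = (c t).2 :=
    (Prod.ext_iff.1 (hright t ht)).2
  have hbox₂ (t : ℝ) (ht : t ∈ J) : (c t).2 ∈ Icc (-r) r := hsnd t ht ▸ (hbox t ht).2
  have hD : MapsTo c J D := fun t ht => hright t ht ▸ hF.mem _ (hbox t ht)
  have hfst (t : ℝ) (ht : t ∈ J) : F ((e.symm (c t)).1, (c t).2) = (c t).1 := by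
    rw [← hsnd t ht]
    exact (Prod.ext_iff.1 (hright t ht)).1
  have hleaf := hF.apply_eq_of_isPhaseCurve hT hc hD hbox₂ (hbox t₀ ht₀).1 ht₀ (hfst t₀ ht₀)
  refine isReparamPhaseCurve_verticalField (u := (e.symm (c t₀)).1) hq hc.1 hc.2.1
    (fun t ht => e.map_target (hV t ht))
    (e.continuousOn_symm.comp (fun t ht => (hc.2.2.2 t ht).continuousWithinAt) hV)
    (fun t ht => (hF.strictMonoOn hT.lipschitzOnWith (hbox₂ t ht)).injOn (hbox t ht).1
      (hbox t₀ ht₀).1 ((hfst t ht).trans (hleaf t ht).symm)) ?_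
  have hy (t : ℝ) (ht : t ∈ J) : HasDerivWithinAt (fun t => (c t).2) (Q (c t)) J t :=
    (hc.2.2.2 t ht).snd
  have hderiv (t : ℝ) (ht : t ∈ J) : HasDerivWithinAt (fun t => q * (c t).2) (q * Q (c t)) J t :=
    (hy t ht).const_mul q
  refine (strictMonoOn_of_hasDerivWithinAt_pos hc.1.convex
    (fun t ht => (hderiv t ht).continuousWithinAt)
    (fun t ht => (hderiv t (interior_subset ht)).mono interior_subset)
    fun t ht => hT.mul_pos _ (hD (interior_subset ht))).congr fun t ht => ?_
  rw [Function.comp_apply, hsnd t ht]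

lemma isOrbitConj_chart (hT : IsTransverseOn P Q q K M D) (hr : 0 ≤ r) (hq : q ≠ 0)
    (hF : IsLeafFlow (fun z => P z / Q z) D F r) (hsource : e.source ⊆ box r)
    (he : ⇑e = fun z => (F z, z.2)) :
    IsOrbitConj e (verticalField q) (fun z => (P z, Q z)) :=
  ⟨mapsPhaseCurves_chart hT hr hq hF hsource he, mapsPhaseCurves_chart_symm hT hq hF hsource he⟩

lemma orbitallyEquivAt_of_isLeafFlow {δ γ : ℝ × ℝ → ℝ} (hT : IsTransverseOn P Q q K M D)
    (hr : 0 < r) (hq : q ≠ 0) (hF : IsLeafFlow (fun z => P z / Q z) D F r)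
    (S : (ℝ × ℝ) ≃ₜ ℝ × ℝ) (hS0 : S (0, 0) = (0, 0)) (hfst : ∀ z, (S z).1 = z.1)
    (hsnd : ∀ u, StrictMono fun y => (S (u, y)).2)
    (hδγ : ∀ᶠ z in 𝓝 (0, 0), γ (S z) = 0 ↔ δ (F z, z.2) = 0) :
    OrbitallyEquivAt (fun z => (P z, Q z)) δ (0, 0) (verticalField q) γ (0, 0) := by
  obtain ⟨e, hsource, he⟩ := exists_chart_of_strictMonoOn (neg_le_self hr.le) hF.continuousOn
    fun y hy => hF.strictMonoOn hT.lipschitzOnWith hy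
  have hsub : e.source ⊆ box r := hsource ▸ prod_mono Ioo_subset_Icc_self Ioo_subset_Icc_self
  have h := (isOrbitConj_chart hT hr.le hq hF hsub he).symm.trans
    (isOrbitConj_verticalField hq S hfst hsnd)
  have h0 : ((0, 0) : ℝ × ℝ) ∈ e.source := by simp [hsource, hr]
  have he0 : e (0, 0) = (0, 0) := by simp [he, hF.apply_zero 0 (hsub h0).1]
  have h0' : ((0, 0) : ℝ × ℝ) ∈ e.target := he0 ▸ e.map_source h0
  have hsymm0 : e.symm (0, 0) = (0, 0) := by simpa only [he0] using e.left_inv h0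
  have hsymm : Tendsto e.symm (𝓝 (0, 0)) (𝓝 (0, 0)) := by
    simpa only [ContinuousAt, hsymm0] using e.continuousAt_symm h0'
  have hequiv := h.orbitallyEquivAt (δ := δ) (γ := γ) (p := (0, 0)) ⟨h0', mem_univ _⟩ (by
    filter_upwards [hsymm.eventually hδγ, e.open_target.mem_nhds h0'] with z hz hzt
    have hright : (F (e.symm z), (e.symm z).2) = z := by simpa only [he] using e.right_inv hzt
    rwa [hright] at hz)
  have himage : (e.symm.trans S.toOpenPartialHomeomorph) (0, 0) = (0, 0) :=
    (congrArg S hsymm0).trans hS0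
  rwa [himage] at hequiv

end FlowBoxConj

/-! ### Flat leaves and the impasse curve -/

section SignChange

lemma neg_of_hasDerivWithinAt_neg_of_eq_zero {f : ℝ → ℝ} {a b : ℝ} (ha : f a = 0)
    (hf : ∀ x ∈ Icc a b, ∃ v, HasDerivWithinAt f v (Icc a b) x ∧ (f x = 0 → v < 0)) :
    ∀ x ∈ Ioc a b, f x < 0 := by
  choose! f' hf' hneg using hf
  have hnonpos : ∀ x ∈ Icc a b, f x ≤ 0 := image_le_of_deriv_right_lt_deriv_boundary'
    (fun x hx => (hf' x hx).continuousWithinAt)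
    (fun x hx => (hf' x (Ico_subset_Icc_self hx)).mono_of_mem_nhdsWithin
      (mem_of_superset (Icc_mem_nhdsGE hx.2) (Icc_subset_Icc_left hx.1)))
    ha.le continuousOn_const (fun x _ => hasDerivWithinAt_const x _ (0 : ℝ))
    fun x hx => hneg x (Ico_subset_Icc_self hx)
  intro x hx
  have hxI : x ∈ Icc a b := Ioc_subset_Icc_self hx
  refine (hnonpos x hxI).lt_of_ne fun hx0 => ?_
  -- A zero would be a maximum of `f` on `[a, b]`, so the left derivative there is nonnegative.
  have hmax : IsLocalMaxOn f (Icc a b) x :=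
    (show IsMaxOn f (Icc a b) x from fun y hy => (hnonpos y hy).trans hx0.ge).localize
  have hcone : a - x ∈ posTangentConeAt (Icc a b) x := sub_mem_posTangentConeAt_of_segment_subset
    ((convex_Icc a b).segment_subset hxI (left_mem_Icc.2 (hx.1.le.trans hx.2)))
  have hle : (a - x) * f' x ≤ 0 := by
    simpa using hmax.hasFDerivWithinAt_nonpos (hf' x hxI).hasFDerivWithinAt hcone
  exact hle.not_gt (mul_pos_of_neg_of_neg (sub_neg.2 hx.1) (hneg x hxI hx0))

lemma exists_sign_change {f : ℝ → ℝ} {a b : ℝ} (hab : a ≤ b) (hf : ContinuousOn f (Icc a b))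
    (ha : 0 ≤ f a) (hb : f b < 0)
    (hneg : ∀ x ∈ Icc a b, f x = 0 → ∀ y ∈ Ioc x b, f y < 0) :
    ∃ x₀ ∈ Icc a b, ∀ x ∈ Icc a b, (0 < f x ↔ x < x₀) ∧ (f x < 0 ↔ x₀ < x) := by
  obtain ⟨x₀, hx₀, hzero⟩ := intermediate_value_Icc' hab hf ⟨hb.le, ha⟩
  have hright {x : ℝ} (hx : x ∈ Icc a b) (h : x₀ < x) : f x < 0 :=
    hneg x₀ hx₀ hzero x ⟨h, hx.2⟩
  have hleft {x : ℝ} (hx : x ∈ Icc a b) (h : x < x₀) : 0 < f x := by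
    by_contra! hle
    obtain ⟨y, hy, hy0⟩ := intermediate_value_Icc' hx.1
      (hf.mono (Icc_subset_Icc_right hx.2)) ⟨hle, ha⟩
    exact (hneg y ⟨hy.1, hy.2.trans hx.2⟩ hy0 x₀ ⟨hy.2.trans_lt h, hx₀.2⟩).ne hzero
  refine ⟨x₀, hx₀, fun x hx => ?_⟩
  rcases lt_trichotomy x x₀ with h | rfl | h
  · simp [h, h.not_gt, hleft hx h, (hleft hx h).le]
  · simp [hzero]
  · simp [h, h.not_gt, hright hx h, (hright hx h).le]

lemma continuousOn_of_sign_change {X : Type*} [TopologicalSpace X] {E : X × ℝ → ℝ} {s : Set X}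
    {a c : ℝ} {b : X → ℝ} (hE : ContinuousOn E (s ×ˢ Icc a c)) (hb : MapsTo b s (Icc a c))
    (hsign : ∀ u ∈ s, ∀ y ∈ Icc a c, (0 < E (u, y) ↔ y < b u) ∧ (E (u, y) < 0 ↔ b u < y)) :
    ContinuousOn b s := by
  have hEy {y : ℝ} (hy : y ∈ Icc a c) : ContinuousOn (fun u => E (u, y)) s :=
    hE.comp (by fun_prop) fun u hu => ⟨hu, hy⟩
  refine fun u hu => tendsto_order.2 ⟨fun y hy => ?_, fun y hy => ?_⟩
  · by_cases hay : a ≤ y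
    · have hyI : y ∈ Icc a c := ⟨hay, hy.le.trans (hb hu).2⟩
      filter_upwards [(hEy hyI u hu).eventually_const_lt (((hsign u hu y hyI).1).2 hy),
        self_mem_nhdsWithin] with u' hpos hu'
      exact ((hsign u' hu' y hyI).1).1 hpos
    · filter_upwards [self_mem_nhdsWithin] with u' hu'
      exact (not_le.1 hay).trans_le (hb hu').1
  · by_cases hyc : y ≤ c
    · have hyI : y ∈ Icc a c := ⟨(hb hu).1.trans hy.le, hyc⟩
      filter_upwards [(hEy hyI u hu).eventually_lt_const (((hsign u hu y hyI).2).2 hy),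
        self_mem_nhdsWithin] with u' hneg hu'
      exact ((hsign u' hu' y hyI).2).1 hneg
    · filter_upwards [self_mem_nhdsWithin] with u' hu'
      exact (hb hu').2.trans_lt (not_le.1 hyc)

end SignChange

section FlatLeaves

/-- A family of graphs `x = F (u, y)`, `y ∈ [-r, r]`, parametrized by the abscissa `u ∈ [-r, r]`
where they cross `y = 0`, whose slopes are `O(|x| + |y| ^ N)` with constant `C`. -/
structure IsFlatLeafFamily (F : ℝ × ℝ → ℝ) (N : ℕ) (C r : ℝ) : Prop where
  continuousOn : ContinuousOn F (box r)
  apply_zero : ∀ u ∈ Icc (-r) r, F (u, 0) = u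
  exists_hasDerivWithinAt : ∀ z ∈ box r, ∃ v,
    HasDerivWithinAt (fun y => F (z.1, y)) v (Icc (-r) r) z.2 ∧ |v| ≤ C * (|F z| + |z.2| ^ N)

variable {F : ℝ × ℝ → ℝ} {k N : ℕ} {C r κ h : ℝ}

lemma IsLeafFlow.isFlatLeafFamily {R : ℝ × ℝ → ℝ} {D : Set (ℝ × ℝ)} (hF : IsLeafFlow R D F r)
    (hR : ∀ z ∈ D, |R z| ≤ C * (|z.1| + |z.2| ^ N)) : IsFlatLeafFamily F N C r where
  continuousOn := hF.continuousOn
  apply_zero := hF.apply_zero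
  exists_hasDerivWithinAt z hz := ⟨_, hF.hasDerivWithinAt z hz, hR _ (hF.mem z hz)⟩

lemma isFlatLeafFamily_fst (hC : 0 ≤ C) (N : ℕ) (r : ℝ) : IsFlatLeafFamily Prod.fst N C r where
  continuousOn := continuousOn_fst
  apply_zero _ _ := rfl
  exists_hasDerivWithinAt z _ := ⟨0, hasDerivWithinAt_const .., by rw [abs_zero]; positivity⟩

lemma IsFlatLeafFamily.reflect (hF : IsFlatLeafFamily F N C r) :
    IsFlatLeafFamily (fun z => F (z.1, -z.2)) N C r := by
  have hneg : MapsTo (fun y => -y) (Icc (-r) r) (Icc (-r) r) := fun y hy =>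
    ⟨neg_le_neg hy.2, neg_le.1 hy.1⟩
  refine ⟨hF.continuousOn.comp (by fun_prop) fun z hz => ⟨hz.1, hneg hz.2⟩,
    fun u hu => by rw [neg_zero, hF.apply_zero u hu], fun z hz => ?_⟩
  obtain ⟨v, hv, hvle⟩ := hF.exists_hasDerivWithinAt (z.1, -z.2) ⟨hz.1, hneg hz.2⟩
  refine ⟨v * -1, hv.comp z.2 (hasDerivAt_neg z.2).hasDerivWithinAt hneg, ?_⟩
  simpa only [mul_neg, mul_one, abs_neg] using hvle

lemma IsFlatLeafFamily.abs_apply_zero_left_le (hF : IsFlatLeafFamily F N C r) (hC : 0 < C)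
    {y : ℝ} (hy : y ∈ Icc 0 r) (hCy : C * y ≤ 1) : |F (0, y)| ≤ 2 * C * y ^ (N + 1) := by
  have hr : 0 ≤ r := hy.1.trans hy.2
  have h0 : (0 : ℝ) ∈ Icc (-r) r := ⟨neg_nonpos.2 hr, hr⟩
  have hmem {s : ℝ} (hs : s ∈ Icc 0 y) : s ∈ Icc (-r) r :=
    ⟨h0.1.trans hs.1, hs.2.trans hy.2⟩
  choose! v hv hvle using hF.exists_hasDerivWithinAt
  have hgronwall := norm_le_gronwallBound_of_norm_deriv_right_le (f := fun s => F (0, s))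
    (f' := fun s => v (0, s)) (δ := 0) (K := C) (ε := C * y ^ N) (a := 0) (b := y)
    (fun s hs => (hv (0, s) ⟨h0, hmem hs⟩).continuousWithinAt.mono fun _ => hmem)
    (fun s hs => (hv (0, s) ⟨h0, hmem (Ico_subset_Icc_self hs)⟩).mono_of_mem_nhdsWithin
      (mem_of_superset (Icc_mem_nhdsGE hs.2) fun x hx => hmem ⟨hs.1.trans hx.1, hx.2⟩))
    (by simp [hF.apply_zero 0 h0])
    (fun s hs => (hvle (0, s) ⟨h0, hmem (Ico_subset_Icc_self hs)⟩).trans (by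
      have hpow : |s| ^ N ≤ y ^ N := pow_le_pow_left₀ (abs_nonneg s)
        ((abs_of_nonneg hs.1).trans_le hs.2.le) N
      rw [Real.norm_eq_abs, ← mul_add]
      gcongr))
    y (right_mem_Icc.2 hy.1)
  have hCy0 : 0 ≤ C * y := mul_nonneg hC.le hy.1
  have hexp : Real.exp (C * y) - 1 ≤ 2 * (C * y) := by
    simpa only [abs_of_nonneg hCy0] using
      (le_abs_self _).trans (Real.abs_exp_sub_one_le ((abs_of_nonneg hCy0).trans_le hCy))
  calc |F (0, y)| ≤ gronwallBound 0 C (C * y ^ N) (y - 0) := hgronwall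
    _ = y ^ N * (Real.exp (C * y) - 1) := by
      simp only [gronwallBound_of_K_ne_0 hC.ne', zero_mul, zero_add,
        mul_div_cancel_left₀ _ hC.ne', sub_zero]
    _ ≤ y ^ N * (2 * (C * y)) := mul_le_mul_of_nonneg_left hexp (pow_nonneg hy.1 N)
    _ = 2 * C * y ^ (N + 1) := by ring

lemma IsFlatLeafFamily.sq_apply_zero_left_lt (hF : IsFlatLeafFamily F N C r) (hC : 0 < C)
    (hN : k ≤ 2 * N) {y : ℝ} (hy : y ∈ Ioc 0 r) (hy1 : y ≤ 1) (hCy : 4 * C * y ≤ 1)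
    (hκ : 16 * C ^ 2 * y < κ) : F (0, y) ^ 2 < κ * y ^ (k + 1) := by
  have hy0 : 0 < y := hy.1
  have hCy0 : 0 < C * y := mul_pos hC hy0
  have hle := hF.abs_apply_zero_left_le hC (Ioc_subset_Icc_self hy) (by linarith)
  calc F (0, y) ^ 2 = |F (0, y)| ^ 2 := (sq_abs _).symm
    _ ≤ (2 * C * y ^ (N + 1)) ^ 2 := by gcongr
    _ = 4 * C ^ 2 * y * y ^ (2 * N + 1) := by ring
    _ ≤ 4 * C ^ 2 * y * y ^ (k + 1) := by
      gcongr ?_ * ?_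
      exact pow_le_pow_of_le_one hy0.le hy1 (by omega)
    _ < κ * y ^ (k + 1) := by
      gcongr
      linarith [mul_pos (sq_pos_of_pos hC) hy0]

/-- Transversality of a flat leaf to the curve `x ^ 2 = κ y ^ (k + 1)` at a common point. -/
lemma two_mul_mul_lt_of_sq_eq (hC : 0 < C) (hN : k ≤ 2 * N) {x y v : ℝ} (hy : 0 < y)
    (hy1 : y ≤ 1) (hCy : 4 * C * y ≤ 1) (hκ : 16 * C ^ 2 * y < κ) (hx : x ^ 2 = κ * y ^ (k + 1))
    (hv : |v| ≤ C * (|x| + y ^ N)) : 2 * x * v < κ * ((k + 1) * y ^ k) := by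
  have hκ0 : 0 < κ := lt_trans (by positivity) hκ
  have hyk : 0 < y ^ k := pow_pos hy k
  have hsq : (4 * C * |x| * y ^ N) ^ 2 < (κ * y ^ k) ^ 2 :=
    calc (4 * C * |x| * y ^ N) ^ 2 = 16 * C ^ 2 * (κ * y ^ (k + 1)) * y ^ (2 * N) := by
          rw [← hx, ← sq_abs x]; ring
      _ ≤ 16 * C ^ 2 * (κ * y ^ (k + 1)) * y ^ k := by
          gcongr ?_ * ?_
          exact pow_le_pow_of_le_one hy.le hy1 hN
      _ = 16 * C ^ 2 * y * (κ * y ^ k * y ^ k) := by ring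
      _ < κ * (κ * y ^ k * y ^ k) := by gcongr
      _ = (κ * y ^ k) ^ 2 := by ring
  have hcross : 4 * C * |x| * y ^ N < κ * y ^ k := lt_of_pow_lt_pow_left₀ 2 (by positivity) hsq
  have hself : 4 * C * |x| ^ 2 ≤ κ * y ^ k :=
    calc 4 * C * |x| ^ 2 = 4 * C * y * (κ * y ^ k) := by rw [sq_abs, hx]; ring
      _ ≤ 1 * (κ * y ^ k) := by gcongr
      _ = κ * y ^ k := one_mul _
  calc 2 * x * v ≤ 2 * (|x| * |v|) := by
        rw [mul_assoc, ← abs_mul]; gcongr; exact le_abs_self _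
    _ ≤ 2 * (|x| * (C * (|x| + y ^ N))) := by gcongr
    _ < κ * y ^ k := by linarith
    _ ≤ κ * ((k + 1) * y ^ k) := by
        gcongr
        exact le_mul_of_one_le_left hyk.le (by simp)

lemma IsFlatLeafFamily.sq_sub_neg_of_eq_zero (hF : IsFlatLeafFamily F N C r) (hC : 0 < C)
    (hN : k ≤ 2 * N) (hhr : h ≤ r) (hh1 : h ≤ 1) (hCh : 4 * C * h ≤ 1) (hκ : 16 * C ^ 2 * h < κ)
    {u : ℝ} (hu : u ∈ Icc (-r) r) {y : ℝ} (hy : 0 ≤ y)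
    (hzero : F (u, y) ^ 2 - κ * y ^ (k + 1) = 0) :
    ∀ y' ∈ Ioc y h, F (u, y') ^ 2 - κ * y' ^ (k + 1) < 0 := by
  rcases hy.eq_or_lt with rfl | hy0
  · obtain rfl : u = 0 := by simpa [hF.apply_zero u hu] using hzero
    intro y' hy'
    have hCy : 4 * C * y' ≤ 1 := le_trans (by gcongr; exact hy'.2) hCh
    have hκy : 16 * C ^ 2 * y' < κ := lt_of_le_of_lt (by gcongr; exact hy'.2) hκ
    exact sub_neg.2 (hF.sq_apply_zero_left_lt hC hN ⟨hy'.1, hy'.2.trans hhr⟩ (hy'.2.trans hh1)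
      hCy hκy)
  · refine neg_of_hasDerivWithinAt_neg_of_eq_zero hzero fun s hs => ?_
    have hs0 : 0 < s := hy0.trans_le hs.1
    have hsub : Icc y h ⊆ Icc (-r) r := Icc_subset_Icc (by linarith [hs.2]) hhr
    obtain ⟨v, hv, hvle⟩ := hF.exists_hasDerivWithinAt (u, s) ⟨hu, hsub hs⟩
    rw [abs_of_pos hs0] at hvle
    have hCs : 4 * C * s ≤ 1 := le_trans (by gcongr; exact hs.2) hCh
    have hκs : 16 * C ^ 2 * s < κ := lt_of_le_of_lt (by gcongr; exact hs.2) hκ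
    refine ⟨_, ((hv.mono hsub).pow 2).sub
      ((hasDerivAt_pow (k + 1) s).hasDerivWithinAt.const_mul κ), fun hs_zero => ?_⟩
    have hlt := two_mul_mul_lt_of_sq_eq hC hN hs0 (hs.2.trans hh1) hCs hκs
      (sub_eq_zero.1 hs_zero) hvle
    simpa using hlt

lemma IsFlatLeafFamily.exists_continuousOn_sign_change (hF : IsFlatLeafFamily F N C r) (hr : 0 < r)
    (hC : 0 < C) (hN : k ≤ 2 * N) (hκ : 0 < κ) :
    ∃ h > 0, ∃ ρ > 0, ∃ b : ℝ → ℝ, ContinuousOn b (Icc (-ρ) ρ) ∧ ∀ u ∈ Icc (-ρ) ρ,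
      F (u, 0) = u ∧ b u ∈ Icc 0 h ∧ ∀ y ∈ Icc 0 h,
        (0 < F (u, y) ^ 2 - κ * y ^ (k + 1) ↔ y < b u) ∧
        (F (u, y) ^ 2 - κ * y ^ (k + 1) < 0 ↔ b u < y) := by
  have hsmall : ∀ᶠ h in 𝓝[>] (0 : ℝ), h < r ∧ h < 1 ∧ 4 * C * h < 1 ∧ 16 * C ^ 2 * h < κ := by
    refine nhdsWithin_le_nhds ?_
    have hlt (a : ℝ) {c : ℝ} (hc : 0 < c) : ∀ᶠ h in 𝓝 (0 : ℝ), a * h < c :=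
      ((continuous_const_mul a).tendsto 0).eventually_lt_const (by simpa using hc)
    exact (eventually_lt_nhds hr).and ((eventually_lt_nhds one_pos).and
      ((hlt _ one_pos).and (hlt _ hκ)))
  obtain ⟨h, ⟨hhr, hh1, hCh, hκh⟩, hh : 0 < h⟩ := (hsmall.and self_mem_nhdsWithin).exists
  have hE : ContinuousOn (fun z : ℝ × ℝ => F z ^ 2 - κ * z.2 ^ (k + 1)) (box r) :=
    (hF.continuousOn.pow 2).sub (by fun_prop)
  have h0 : (0 : ℝ) ∈ Icc (-r) r := ⟨neg_nonpos.2 hr.le, hr.le⟩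
  have hIcc : Icc 0 h ⊆ Icc (-r) r := Icc_subset_Icc h0.1 hhr.le
  have htop : ∀ᶠ u in 𝓝 (0 : ℝ), u ∈ Icc (-r) r ∧ F (u, h) ^ 2 - κ * h ^ (k + 1) < 0 := by
    have hcont : ContinuousAt (fun u => F (u, h) ^ 2 - κ * h ^ (k + 1)) 0 :=
      ContinuousOn.continuousAt (hE.comp (by fun_prop) fun u hu => ⟨hu, hIcc ⟨hh.le, le_rfl⟩⟩)
        (Icc_mem_nhds (neg_neg_of_pos hr) hr)
    exact Filter.Eventually.and (Icc_mem_nhds (neg_neg_of_pos hr) hr) (hcont.eventually_lt_const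
      (sub_neg.2 (hF.sq_apply_zero_left_lt hC hN ⟨hh, hhr.le⟩ hh1.le hCh.le hκh)))
  obtain ⟨ρ, hρ, hρsub⟩ := Metric.nhds_basis_closedBall.mem_iff.1 htop
  simp only [Real.closedBall_eq_Icc, zero_sub, zero_add] at hρsub
  have hbox {u : ℝ} (hu : u ∈ Icc (-ρ) ρ) {y : ℝ} (hy : y ∈ Icc 0 h) : (u, y) ∈ box r :=
    ⟨(hρsub hu).1, hIcc hy⟩
  have hsign (u : ℝ) (hu : u ∈ Icc (-ρ) ρ) := exists_sign_change hh.le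
    (hE.comp (by fun_prop : ContinuousOn (fun y => (u, y)) (Icc 0 h)) fun y hy => hbox hu hy)
    (by simp [sq_nonneg]) (hρsub hu).2
    fun y hy => hF.sq_sub_neg_of_eq_zero hC hN hhr.le hh1.le hCh.le hκh (hρsub hu).1 hy.1
  choose! b hb hbsign using hsign
  exact ⟨h, hh, ρ, hρ, b,
    continuousOn_of_sign_change (hE.mono fun z hz => hbox hz.1 hz.2) hb hbsign,
    fun u hu => ⟨hF.apply_zero u (hρsub hu).1, hb u hu, hbsign u hu⟩⟩

/-- Near the origin, the zero set of `γ` in the upper half plane is the graph of the continuous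
function `b ≥ 0`, which vanishes only at `0`, if `s` holds, and reduces to the origin otherwise (the
convention is then `b = 0`). -/
structure IsUpperBranch (γ : ℝ × ℝ → ℝ) (s : Prop) (b : ℝ → ℝ) : Prop where
  continuous : Continuous b
  nonneg : ∀ u, 0 ≤ b u
  pos_iff : ∀ u, 0 < b u ↔ s ∧ u ≠ 0
  eventually_eq_zero_iff : ∀ᶠ z in 𝓝 (0, 0), 0 ≤ z.2 → (γ z = 0 ↔ z.2 = b z.1 ∧ (s ∨ z.1 = 0))

lemma IsFlatLeafFamily.exists_isUpperBranch_of_neg (hF : IsFlatLeafFamily F N C r) (hr : 0 < r)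
    (hC : 0 < C) (hN : k ≤ 2 * N) {e : ℝ} (he : e < 0) :
    ∃ b, IsUpperBranch (fun z => F z ^ 2 + e * z.2 ^ (k + 1)) True b := by
  obtain ⟨h, hh, ρ, hρ, b, hbcont, hb⟩ :=
    hF.exists_continuousOn_sign_change hr hC hN (neg_pos.2 he)
  have hpos {u : ℝ} (hu : u ∈ Icc (-ρ) ρ) : 0 < b u ↔ u ≠ 0 := by
    obtain ⟨hu0, -, hsign⟩ := hb u hu
    rw [← (hsign 0 ⟨le_rfl, hh.le⟩).1, hu0]
    simp [sq_pos_iff]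
  have hle : -ρ ≤ ρ := by linarith
  have hproj {u : ℝ} (hu : u ∈ Icc (-ρ) ρ) : (projIcc (-ρ) ρ hle u : ℝ) = u := by
    rw [projIcc_of_mem hle hu]
  refine ⟨fun u => b (projIcc (-ρ) ρ hle u), ?_, fun u => (hb _ (Subtype.prop _)).2.1.1,
    fun u => ?_, ?_⟩
  · exact hbcont.comp_continuous (continuous_subtype_val.comp continuous_projIcc)
      fun u => Subtype.prop _
  · rw [hpos (Subtype.prop _), coe_projIcc]
    grind
  · filter_upwards [prod_mem_nhds (Icc_mem_nhds (neg_neg_of_pos hρ) hρ) (Iic_mem_nhds hh)]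
      with z hz hz2
    obtain ⟨-, -, hsign⟩ := hb z.1 hz.1
    obtain ⟨hlt, hgt⟩ := hsign z.2 ⟨hz2, hz.2⟩
    rw [hproj hz.1]
    grind

lemma IsFlatLeafFamily.exists_isUpperBranch (hF : IsFlatLeafFamily F N C r) (hr : 0 < r)
    (hC : 0 < C) (hN : k ≤ 2 * N) {e : ℝ} (he : e ≠ 0) :
    ∃ b, IsUpperBranch (fun z => F z ^ 2 + e * z.2 ^ (k + 1)) (e < 0) b := by
  rcases he.lt_or_gt with he | he
  · simpa only [he] using hF.exists_isUpperBranch_of_neg hr hC hN he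
  · refine ⟨0, continuous_zero, fun _ => le_rfl, fun u => by simp [he.not_gt], ?_⟩
    filter_upwards [box_mem_nhds hr] with z hz hz2
    have hpow : 0 ≤ e * z.2 ^ (k + 1) := by positivity
    rw [add_eq_zero_iff_of_nonneg (sq_nonneg _) hpow, sq_eq_zero_iff, mul_eq_zero,
      or_iff_right he.ne', pow_eq_zero_iff k.succ_ne_zero, and_comm]
    simp only [he.not_gt, false_or, Pi.zero_apply]
    refine and_congr_right fun hz0 => ?_
    rw [← Prod.mk.eta (p := z), hz0, hF.apply_zero z.1 hz.1]

end FlatLeaves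

/-! ### Matching the impasse curves -/

section Stretch

/-- The piecewise linear map of `ℝ` which is the identity on `(-∞, 0]`, maps `[0, b]` linearly onto
`[0, b']`, and is a translation on `[b, ∞)`. It is meant for `b` and `b'` both positive or both
zero; in the latter case `b' / b = 0` is harmless, since its coefficient vanishes. -/
noncomputable def stretch (b b' y : ℝ) : ℝ := y + (b' / b - 1) * max 0 (min y b)

variable {b b' y : ℝ}

lemma stretch_of_nonpos (hy : y ≤ 0) : stretch b b' y = y := by
  simp [stretch, max_eq_left (min_le_of_left_le hy : min y b ≤ 0)]

lemma stretch_zero : stretch 0 b' y = y := by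
  simp [stretch]

lemma stretch_of_mem_Icc (hy : y ∈ Icc 0 b) : stretch b b' y = b' / b * y := by
  rw [stretch, min_eq_left hy.2, max_eq_right hy.1]
  ring

lemma stretch_of_le (hb : 0 < b) (hy : b ≤ y) : stretch b b' y = y + b' - b := by
  rw [stretch, min_eq_right hy, max_eq_right hb.le]
  field_simp
  ring

lemma stretch_self_of_pos (hb : 0 < b) : stretch b b' b = b' := by
  rw [stretch_of_le hb le_rfl]
  ring

lemma stretch_stretch_of_pos (hb : 0 < b) (hb' : 0 < b') (y : ℝ) :
    stretch b' b (stretch b b' y) = y := by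
  rcases le_total y 0 with hy | hy
  · rw [stretch_of_nonpos hy, stretch_of_nonpos hy]
  rcases le_total y b with hyb | hyb
  · rw [stretch_of_mem_Icc ⟨hy, hyb⟩, stretch_of_mem_Icc ⟨by positivity, ?_⟩]
    · field_simp
    · rwa [div_mul_eq_mul_div, div_le_iff₀ hb, mul_le_mul_iff_right₀ hb']
  · rw [stretch_of_le hb hyb, stretch_of_le hb' (by linarith)]
    ring

lemma strictMono_stretch_of_pos (hb : 0 < b) (hb' : 0 < b') : StrictMono (stretch b b') := by
  intro y z hyz
  have hslope : 0 < b' / b := div_pos hb' hb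
  have hclamp : max 0 (min y b) ≤ max 0 (min z b) := by gcongr
  have hcontr : max 0 (min z b) - max 0 (min y b) ≤ z - y := by grind
  unfold stretch
  rcases hclamp.eq_or_lt with heq | hlt
  · rw [heq]
    linarith
  · linarith [mul_pos hslope (sub_pos.2 hlt)]

lemma continuous_stretch {X : Type*} [TopologicalSpace X] {b b' y : X → ℝ} (hb : Continuous b)
    (hb' : Continuous b') (hy : Continuous y) (hb0 : ∀ x, 0 ≤ b x) (hb'0 : ∀ x, 0 ≤ b' x)
    (hbb' : ∀ x, b x = 0 → b' x = 0) : Continuous fun x => stretch (b x) (b' x) (y x) := by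
  have hclamp : Continuous fun x => max 0 (min (y x) (b x)) := by fun_prop
  have hmul : Continuous fun x => b' x / b x * max 0 (min (y x) (b x)) := by
    refine continuous_iff_continuousAt.2 fun x => ?_
    by_cases hx : b x = 0
    · have hbound (x : X) : b' x / b x * max 0 (min (y x) (b x)) ≤ b' x :=
        calc b' x / b x * max 0 (min (y x) (b x)) ≤ b' x / b x * b x := by
              gcongr
              · exact div_nonneg (hb'0 x) (hb0 x)
              · exact max_le (hb0 x) (min_le_right _ _)
          _ = b' x := div_mul_cancel_of_imp (hbb' x)
      have hzero : Tendsto b' (𝓝 x) (𝓝 0) := hbb' x hx ▸ hb'.tendsto x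
      rw [ContinuousAt, hx, div_zero, zero_mul]
      exact squeeze_zero
        (fun x => mul_nonneg (div_nonneg (hb'0 x) (hb0 x)) (le_max_left _ _)) hbound hzero
    · exact (hb'.continuousAt.div hb.continuousAt hx).mul hclamp.continuousAt
  refine ((hy.sub hclamp).add hmul).congr fun x => ?_
  simp only [stretch, Pi.add_apply, Pi.sub_apply]
  ring

variable {γ γ' : ℝ × ℝ → ℝ} {s s' : Prop} {β β' : ℝ → ℝ}

lemma IsUpperBranch.eq_zero_iff (h : IsUpperBranch γ s β) (h' : IsUpperBranch γ' s β') (u : ℝ) :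
    β u = 0 ↔ β' u = 0 := by
  rw [← not_iff_not, ← ne_eq, ← ne_eq, ← (h.nonneg u).lt_iff_ne', h.pos_iff, ← h'.pos_iff,
    (h'.nonneg u).lt_iff_ne']

lemma IsUpperBranch.pos_or_zero (h : IsUpperBranch γ s β) (h' : IsUpperBranch γ' s β') (u : ℝ) :
    0 < β u ∧ 0 < β' u ∨ β u = 0 ∧ β' u = 0 := by
  rcases (h.nonneg u).eq_or_lt with h0 | hpos
  · exact .inr ⟨h0.symm, (h.eq_zero_iff h' u).1 h0.symm⟩
  · exact .inl ⟨hpos, (h'.pos_iff u).2 ((h.pos_iff u).1 hpos)⟩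

lemma IsUpperBranch.stretch_stretch (h : IsUpperBranch γ s β) (h' : IsUpperBranch γ' s β')
    (u y : ℝ) : stretch (β' u) (β u) (stretch (β u) (β' u) y) = y := by
  rcases h.pos_or_zero h' u with ⟨hb, hb'⟩ | ⟨hb, hb'⟩
  · exact stretch_stretch_of_pos hb hb' y
  · rw [hb, hb', stretch_zero, stretch_zero]

lemma IsUpperBranch.strictMono_stretch (h : IsUpperBranch γ s β) (h' : IsUpperBranch γ' s β')
    (u : ℝ) : StrictMono (stretch (β u) (β' u)) := by
  rcases h.pos_or_zero h' u with ⟨hb, hb'⟩ | ⟨hb, -⟩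
  · exact strictMono_stretch_of_pos hb hb'
  · rw [hb]
    exact fun y z hyz => by simpa only [stretch_zero] using hyz

lemma IsUpperBranch.stretch_self (h : IsUpperBranch γ s β) (h' : IsUpperBranch γ' s β') (u : ℝ) :
    stretch (β u) (β' u) (β u) = β' u := by
  rcases h.pos_or_zero h' u with ⟨hb, -⟩ | ⟨hb, hb'⟩
  · exact stretch_self_of_pos hb
  · rw [hb, hb', stretch_zero]

lemma IsUpperBranch.continuous_prodMk_stretch (h : IsUpperBranch γ s β)
    (h' : IsUpperBranch γ' s β') :
    Continuous fun z : ℝ × ℝ => (z.1, stretch (β z.1) (β' z.1) z.2) :=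
  continuous_fst.prodMk (continuous_stretch (h.continuous.comp continuous_fst)
    (h'.continuous.comp continuous_fst) continuous_snd (fun _ => h.nonneg _)
    (fun _ => h'.nonneg _) fun _ => (h.eq_zero_iff h' _).1)

/-- The homeomorphism stretching each vertical line so that the branch `β` is carried to `β'`. -/
noncomputable def IsUpperBranch.stretchHomeo (h : IsUpperBranch γ s β)
    (h' : IsUpperBranch γ' s β') : (ℝ × ℝ) ≃ₜ ℝ × ℝ where
  toFun z := (z.1, stretch (β z.1) (β' z.1) z.2)
  invFun z := (z.1, stretch (β' z.1) (β z.1) z.2)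
  left_inv z := Prod.ext rfl (h.stretch_stretch h' z.1 z.2)
  right_inv z := Prod.ext rfl (h'.stretch_stretch h z.1 z.2)
  continuous_toFun := h.continuous_prodMk_stretch h'
  continuous_invFun := h'.continuous_prodMk_stretch h

lemma IsUpperBranch.stretchHomeo_of_nonpos (h : IsUpperBranch γ s β) (h' : IsUpperBranch γ' s β')
    {z : ℝ × ℝ} (hz : z.2 ≤ 0) : h.stretchHomeo h' z = z :=
  Prod.ext rfl (stretch_of_nonpos hz)

lemma IsUpperBranch.stretchHomeo_nonneg (h : IsUpperBranch γ s β) (h' : IsUpperBranch γ' s β')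
    {z : ℝ × ℝ} (hz : 0 ≤ z.2) : 0 ≤ (h.stretchHomeo h' z).2 :=
  (stretch_of_nonpos le_rfl).ge.trans ((h.strictMono_stretch h' z.1).monotone hz)

lemma IsUpperBranch.eventually_stretchHomeo_eq_zero_iff (h : IsUpperBranch γ s β)
    (h' : IsUpperBranch γ' s β') :
    ∀ᶠ z in 𝓝 (0, 0), 0 ≤ z.2 → (γ' (h.stretchHomeo h' z) = 0 ↔ γ z = 0) := by
  have hS : Tendsto (h.stretchHomeo h') (𝓝 (0, 0)) (𝓝 (0, 0)) :=
    (h.stretchHomeo h').continuous.tendsto' _ _ (h.stretchHomeo_of_nonpos h' le_rfl)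
  filter_upwards [h.eventually_eq_zero_iff, hS.eventually h'.eventually_eq_zero_iff]
    with z hz hz' hz2
  have hiff : stretch (β z.1) (β' z.1) z.2 = β' z.1 ↔ z.2 = β z.1 := by
    rw [← (h.strictMono_stretch h' z.1).injective.eq_iff (b := β z.1), h.stretch_self h']
  rw [hz hz2, hz' (h.stretchHomeo_nonneg h' hz2)]
  exact and_congr_left fun _ => hiff

/-- The reflection in the horizontal axis. -/
def flipSnd : (ℝ × ℝ) ≃ₜ ℝ × ℝ := (Homeomorph.refl ℝ).prodCongr (Homeomorph.neg ℝ)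

lemma flipSnd_apply (z : ℝ × ℝ) : flipSnd z = (z.1, -z.2) := rfl

lemma exists_homeomorph_of_isUpperBranch {α α' : ℝ → ℝ}
    (h : IsUpperBranch γ s β) (h' : IsUpperBranch γ' s β')
    (hflip : IsUpperBranch (γ ∘ flipSnd) s' α) (hflip' : IsUpperBranch (γ' ∘ flipSnd) s' α') :
    ∃ S : (ℝ × ℝ) ≃ₜ ℝ × ℝ, S (0, 0) = (0, 0) ∧ (∀ z, (S z).1 = z.1) ∧
      (∀ u, StrictMono fun y => (S (u, y)).2) ∧ ∀ᶠ z in 𝓝 (0, 0), γ' (S z) = 0 ↔ γ z = 0 := by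
  set T := h.stretchHomeo h'
  set T' := hflip.stretchHomeo hflip'
  have hupper {z : ℝ × ℝ} (hz : 0 ≤ z.2) : flipSnd (T' (flipSnd (T z))) = T z := by
    rw [hflip.stretchHomeo_of_nonpos hflip' (neg_nonpos.2 (h.stretchHomeo_nonneg h' hz))]
    simp [flipSnd_apply]
  have hlower {z : ℝ × ℝ} (hz : z.2 ≤ 0) :
      flipSnd (T' (flipSnd (T z))) = flipSnd (T' (flipSnd z)) := by
    rw [h.stretchHomeo_of_nonpos h' hz]
  have hflip0 : Tendsto flipSnd (𝓝 (0, 0)) (𝓝 (0, 0)) :=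
    flipSnd.continuous.tendsto' _ _ (by simp [flipSnd_apply])
  refine ⟨((T.trans flipSnd).trans T').trans flipSnd, ?_, fun z => rfl, fun u y y' hy => ?_, ?_⟩
  · exact (hupper le_rfl).trans (h.stretchHomeo_of_nonpos h' le_rfl)
  · exact neg_lt_neg (hflip.strictMono_stretch hflip' u
      (neg_lt_neg (h.strictMono_stretch h' u hy)))
  · filter_upwards [h.eventually_stretchHomeo_eq_zero_iff h',
      hflip0.eventually (hflip.eventually_stretchHomeo_eq_zero_iff hflip')] with z hz hz'
    rcases le_total 0 z.2 with hz2 | hz2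
    · exact (hupper hz2) ▸ hz hz2
    · have hiff := hz' (neg_nonneg.2 hz2)
      simp only [Function.comp_apply] at hiff
      rw [show flipSnd (flipSnd z) = z by simp [flipSnd_apply]] at hiff
      exact (hlower hz2) ▸ hiff

end Stretch

section Equivalence

variable {P Q F : ℝ × ℝ → ℝ} {k N : ℕ} {C r ε : ℝ}

lemma IsFlatLeafFamily.exists_isUpperBranch_flipSnd (hF : IsFlatLeafFamily F N C r) (hr : 0 < r)
    (hC : 0 < C) (hN : k ≤ 2 * N) (hε : ε ≠ 0) :
    ∃ b, IsUpperBranch ((fun z => F z ^ 2 + ε * z.2 ^ (k + 1)) ∘ flipSnd)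
      (ε * (-1) ^ (k + 1) < 0) b := by
  have hε' : ε * (-1) ^ (k + 1) ≠ 0 := mul_ne_zero hε (pow_ne_zero _ (by norm_num))
  obtain ⟨b, hb⟩ := hF.reflect.exists_isUpperBranch hr hC hN hε'
  refine ⟨b, ?_⟩
  convert hb using 2 with z
  rw [Function.comp_apply, flipSnd_apply, neg_pow z.2, mul_assoc]

lemma IsFlatLeafFamily.exists_homeomorph (hF : IsFlatLeafFamily F N C r) (hr : 0 < r)
    (hC : 0 < C) (hN : k ≤ 2 * N) (hε : ε ≠ 0) :
    ∃ S : (ℝ × ℝ) ≃ₜ ℝ × ℝ, S (0, 0) = (0, 0) ∧ (∀ z, (S z).1 = z.1) ∧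
      (∀ u, StrictMono fun y => (S (u, y)).2) ∧
      ∀ᶠ z in 𝓝 (0, 0), (S z).1 ^ 2 + ε * (S z).2 ^ (k + 1) = 0 ↔
        F z ^ 2 + ε * z.2 ^ (k + 1) = 0 := by
  have hfst := isFlatLeafFamily_fst hC.le N r
  obtain ⟨b, hb⟩ := hF.exists_isUpperBranch hr hC hN hε
  obtain ⟨b', hb'⟩ := hfst.exists_isUpperBranch hr hC hN hε
  obtain ⟨a, ha⟩ := hF.exists_isUpperBranch_flipSnd hr hC hN hε
  obtain ⟨a', ha'⟩ := hfst.exists_isUpperBranch_flipSnd hr hC hN hε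
  exact exists_homeomorph_of_isUpperBranch hb hb' ha ha'

lemma exists_isTransverseOn (hP : ContDiffAt ℝ 1 P (0, 0)) (hQ : ContDiffAt ℝ 1 Q (0, 0))
    (hQ0 : Q (0, 0) ≠ 0) :
    ∃ K M : ℝ≥0, ∃ D ∈ 𝓝 (0, 0), IsTransverseOn P Q (Q (0, 0)) K M D := by
  obtain ⟨K, D₁, hD₁, hK⟩ := (hP.div hQ hQ0).exists_lipschitzOnWith
  obtain ⟨K', D₂, hD₂, hK'⟩ := hQ.exists_lipschitzOnWith
  have hM : ∀ᶠ z in 𝓝 (0, 0), ‖Q z‖ < ‖Q (0, 0)‖₊ + 1 :=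
    hQ.continuousAt.norm.eventually_lt_const (lt_add_one _)
  have hpos : ∀ᶠ z in 𝓝 (0, 0), 0 < Q (0, 0) * Q z :=
    (hQ.continuousAt.const_mul (Q (0, 0))).eventually_const_lt (mul_self_pos.2 hQ0)
  exact ⟨K, ‖Q (0, 0)‖₊ + 1, _, inter_mem (inter_mem hD₁ hD₂) (inter_mem hM hpos),
    hK.mono fun z hz => hz.1.1, hK'.continuousOn.mono fun z hz => hz.1.2,
    fun z hz => hz.2.1.le, fun z hz => hz.2.2⟩

lemma exists_abs_le_of_lipschitzOnWith {R : ℝ × ℝ → ℝ} {K : ℝ≥0} {D : Set (ℝ × ℝ)}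
    (hR : LipschitzOnWith K R D) (hD : D ∈ 𝓝 (0, 0))
    (hflat : (fun y => R (0, y)) =O[𝓝 0] fun y => y ^ N) :
    ∃ C > 0, ∀ᶠ z in 𝓝 (0, 0), |R z| ≤ C * (|z.1| + |z.2| ^ N) := by
  obtain ⟨A, hA, hbound⟩ := hflat.exists_pos
  have hsnd : Tendsto (Prod.snd : ℝ × ℝ → ℝ) (𝓝 (0, 0)) (𝓝 0) := continuous_snd.tendsto _
  have haxis : Tendsto (fun z : ℝ × ℝ => ((0 : ℝ), z.2)) (𝓝 (0, 0)) (𝓝 (0, 0)) :=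
    Continuous.tendsto' (by fun_prop) _ _ rfl
  refine ⟨K + A, by positivity, ?_⟩
  filter_upwards [hD, haxis.eventually hD, hsnd.eventually hbound.bound] with z hz hz0 hA'
  have hlip : |R z - R (0, z.2)| ≤ K * |z.1| := by
    simpa [Prod.dist_eq, Real.dist_eq] using hR.dist_le_mul z hz (0, z.2) hz0
  rw [norm_pow, Real.norm_eq_abs, Real.norm_eq_abs] at hA'
  calc |R z| ≤ |R z - R (0, z.2)| + |R (0, z.2)| := by
        simpa using abs_add_le (R z - R (0, z.2)) (R (0, z.2))
    _ ≤ K * |z.1| + A * |z.2| ^ N := add_le_add hlip hA'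
    _ ≤ (K + A) * (|z.1| + |z.2| ^ N) := by
        have h₁ : 0 ≤ A * |z.1| := by positivity
        have h₂ : 0 ≤ K * |z.2| ^ N := by positivity
        linarith

lemma isBigO_pow_of_iteratedDeriv_eq_zero {f : ℝ → ℝ} (hf : AnalyticAt ℝ f 0) (h0 : f 0 = 0)
    (hzero : ∀ n, 1 ≤ n → n < N → iteratedDeriv n f 0 = 0) : f =O[𝓝 0] fun y => y ^ N := by
  have hzero' (n : ℕ) (hn : n < N) : iteratedDeriv n f 0 = 0 := by
    rcases n.eq_zero_or_pos with rfl | hn0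
    · rwa [iteratedDeriv_zero]
    · exact hzero n hn0 hn
  obtain ⟨g, hg, hfg⟩ := (natCast_le_analyticOrderAt hf).1
    ((natCast_le_analyticOrderAt_iff_iteratedDeriv_eq_zero hf).2 hzero')
  simp only [sub_zero, smul_eq_mul] at hfg
  simpa only [mul_one] using EventuallyEq.trans_isBigO hfg
    ((isBigO_refl (fun y : ℝ => y ^ N) (𝓝 0)).mul (hg.continuousAt.tendsto.isBigO_one ℝ))

end Equivalence

theorem Ak_case3_general {k N : ℕ} (hN : k ≤ 2 * N) {ε : ℝ} (hε : ε ≠ 0) {P Q : ℝ × ℝ → ℝ}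
    (hP : ContDiffAt ℝ 1 P (0, 0)) (hQ : ContDiffAt ℝ 1 Q (0, 0)) (hQ0 : Q (0, 0) ≠ 0)
    (hflat : (fun y => P (0, y)) =O[𝓝 0] fun y => y ^ N) :
    OrbitallyEquivAt (fun z => (P z, Q z)) (fun z => z.1 ^ 2 + ε * z.2 ^ (k + 1)) (0, 0)
      (fun _ => ((0 : ℝ), Q (0, 0))) (fun z => z.1 ^ 2 + ε * z.2 ^ (k + 1)) (0, 0) := by
  obtain ⟨K, M, D, hD, hT⟩ := exists_isTransverseOn hP hQ hQ0
  have hflat' : (fun y => P (0, y) / Q (0, y)) =O[𝓝 0] fun y => y ^ N := by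
    have hQinv : ContinuousAt (fun y => (Q (0, y))⁻¹) 0 :=
      (hQ.continuousAt.comp (x := (0 : ℝ)) (f := fun y => ((0 : ℝ), y)) (by fun_prop)).inv₀ hQ0
    simpa only [div_eq_mul_inv, mul_one] using hflat.mul (hQinv.tendsto.isBigO_one ℝ)
  obtain ⟨C, hC, hbound⟩ := exists_abs_le_of_lipschitzOnWith hT.lipschitzOnWith hD hflat'
  have hT' := hT.mono (inter_subset_left (t := {z | |P z / Q z| ≤ C * (|z.1| + |z.2| ^ N)}))
  obtain ⟨F, r, hr, hF⟩ := exists_isLeafFlow hT'.lipschitzOnWith (inter_mem hD hbound)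
  obtain ⟨S, hS0, hfst, hsnd, hS⟩ :=
    (hF.isFlatLeafFamily fun z hz => hz.2).exists_homeomorph hr hC hN hε
  exact orbitallyEquivAt_of_isLeafFlow hT' hr hQ0 hF S hS0 hfst hsnd hS

/-- (`A_k`-type impasse curve, Case 3 of Table 2.)
If `δ(x,y) = x² + ε·y^{k+1}`, `X = (P,Q)` is real-analytic near the origin with `P(0,0) = 0`,
`Q(0,0) ≠ 0`, and `∂ⁿP/∂yⁿ(0,0) = 0` for all `1 ≤ 2n ≤ k − 1` (i.e. `k − 1 < 2n₀`), then
`(X, δ)` is orientation-preserving `C⁰`-orbitally equivalent at the origin to the system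
with constant adjoint vector field `(0, Q(0,0))`. -/
theorem Ak_case3 (k : ℕ) (hk : 1 ≤ k) (ε : ℝ) (hε : ε = 1 ∨ ε = -1)
    (P Q : ℝ × ℝ → ℝ)
    (hP : AnalyticAt ℝ P (0, 0)) (hQ : AnalyticAt ℝ Q (0, 0))
    (hP0 : P (0, 0) = 0) (hQ0 : Q (0, 0) ≠ 0)
    (hflat : ∀ n : ℕ, 1 ≤ n → 2 * n ≤ k - 1 → iteratedDeriv n (fun y => P (0, y)) 0 = 0) :
    OrbitallyEquivAt (fun z => (P z, Q z)) (fun z => z.1 ^ 2 + ε * z.2 ^ (k + 1)) (0, 0)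
      (fun _ => ((0 : ℝ), Q (0, 0))) (fun z => z.1 ^ 2 + ε * z.2 ^ (k + 1)) (0, 0) := by
  have hP' : AnalyticAt ℝ (fun y => P (0, y)) 0 := hP.comp (analyticAt_const.prod analyticAt_id)
  exact Ak_case3_general (N := (k + 1) / 2) (by omega) (by rcases hε with rfl | rfl <;> norm_num)
    hP.contDiffAt hQ.contDiffAt hQ0 (isBigO_pow_of_iteratedDeriv_eq_zero hP' hP0
      fun n hn hnN => hflat n hn (by omega))
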